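/- arXiv:1105.2755 — 3 statements merged into one kernel-verified Lean document; each statement's English description precedes it below -/
import Mathlib

section
/- Assume persistent connectivity and that 𝐫(t) is finite for all t. Fix p ∈ ℕ. Let q ∈ {0,…,⌊n/2⌋−1}, τ ∈ [t_p, t_p^q], and l ∈ {1,…,n−1} with y_l(τ) < y_{l+1}(τ). Then there exists τ′ ∈ [t_p, t_p^{q+1}] such that either y_1(τ′) − y_1(τ) ≥ (𝐫(t_{p+1})^{−l} / (8n)) · (y_{l+1}(τ) − y_l(τ)), or there exists l′ ∈ {1,…,l−1} with y_{l′+1}(τ′) − y_{l′}(τ′) ≥ (𝐫(t_{p+1})^{l′−l} / (8n²)) · (y_{l+1}(τ) − y_l(τ)). -/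
/-!
Write `y_k` for the sorted values, `r = 𝐫(t_{p+1}) ≥ 1`, `ρ = r⁻¹` and `δ = y_{l+1}(τ) - y_l(τ)`.
The key quantity is `V_m = ∑_{k ≤ m} ρ^k y_k`. Expanding the differences `y_j - y_i` into
consecutive gaps, the gap between ranks `k` and `k + 1` enters the drift of `V_m` with the
coefficient `ρ^k · (upward flow) - ρ^{k+1} · (downward flow)` or more, which is nonnegative by
reciprocity across the cut; for `k = m` it is at least `ρ^m` times the upward flow (`drift_lower`,
`traj_drift`). By the rearrangement inequality `V_m` is a minimum of finitely many absolutely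
continuous functions, so its increments are bounded below by the integral of this drift (`growth`).

Suppose that neither alternative holds on `[τ, t_p^{q+1}]`. Summing the small gaps,
`V_l(t) - V_l(τ) ≤ ρ^{l+1} δ / 4` and `y_l(t) ≤ y_l(τ) + δ / 8` (`sorted_rise_le`,
`weighted_rise_le`). As `V_{l+1}` is nondecreasing, `y_{l+1}(t) ≥ y_{l+1}(τ) - δ / 4`. Hence a fixed
level separates the ranks `≤ l` from the ranks `> l`, the set of the `l` lowest agents is constant
(`low_set_const`), and the gap above them stays at least `δ / 2`. The flow into this set over
`[t_p^q, t_p^{q+1}]` is at least one (`one_le_cutSum_nextTime`), which forces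
`V_l` to grow by `ρ^l δ / 2`, a contradiction (`no_small_rise`).
-/

open MeasureTheory Filter Finset
open scoped ENNReal

/-- Interaction weights: non-negative, measurable, integrable on bounded intervals. -/
def IsWeight (n : ℕ) (a : Fin n → Fin n → ℝ → ℝ) : Prop :=
  ∀ i j : Fin n, (∀ t, 0 ≤ a i j t) ∧ Measurable (a i j) ∧
    ∀ T : ℝ, IntervalIntegrable (a i j) MeasureTheory.volume 0 T

/-- A trajectory of the continuous-time consensus system: a (locally absolutely) continuous
function satisfying the Carathéodory integral equation. -/
def IsTrajectory (n : ℕ) (a : Fin n → Fin n → ℝ → ℝ) (x : ℝ → Fin n → ℝ) : Prop :=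
  (∀ i : Fin n, ContinuousOn (fun t => x t i) (Set.Ici (0:ℝ))) ∧
  (∀ i : Fin n, ∀ t : ℝ, 0 ≤ t →
    IntervalIntegrable (fun s => ∑ j : Fin n, a i j s * (x s j - x s i))
      MeasureTheory.volume 0 t ∧
    x t i = x 0 i + ∫ s in (0:ℝ)..t, ∑ j : Fin n, a i j s * (x s j - x s i))

/-- Group diameter Δ_N(t). -/
noncomputable def diam (n : ℕ) (x : ℝ → Fin n → ℝ) (t : ℝ) : ℝ :=
  (⨆ i, x t i) - (⨅ i, x t i)

/-- Persistent connectivity: the graph with edge (j,i) whenever ∫_0^∞ a_{ij} = ∞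
is strongly connected. -/
def PersistentConn (n : ℕ) (a : Fin n → Fin n → ℝ → ℝ) : Prop :=
  ∀ u v : Fin n, Relation.ReflTransGen
    (fun j i => ∫⁻ s in Set.Ioi (0:ℝ), ENNReal.ofReal (a i j s) = ⊤) u v

noncomputable def cutSum (n : ℕ) (a : Fin n → Fin n → ℝ → ℝ)
    (S : Finset (Fin n)) (t0 t : ℝ) : ℝ :=
  ∑ i ∈ S, ∑ j ∈ Sᶜ, ∫ s in t0..t, a i j s

noncomputable def minCut (n : ℕ) (a : Fin n → Fin n → ℝ → ℝ) (t0 t : ℝ) : ℝ :=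
  sInf ((fun S => cutSum n a S t0 t) '' {S : Finset (Fin n) | S.Nonempty ∧ S ≠ Finset.univ})

/-- The smallest `t ≥ t0` with `minCut n a t0 t = 1`. -/
noncomputable def nextTime (n : ℕ) (a : Fin n → Fin n → ℝ → ℝ) (t0 : ℝ) : ℝ :=
  sInf {t : ℝ | t0 ≤ t ∧ minCut n a t0 t = 1}

/-- The rescaling sequence (t_p): t_0 = 0 and t_{p+1} is obtained from t_p by ⌊n/2⌋
steps of `nextTime`. -/
noncomputable def tpSeq (n : ℕ) (a : Fin n → Fin n → ℝ → ℝ) : ℕ → ℝ :=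
  fun p => ((nextTime n a)^[n/2])^[p] 0

/-- Intermediate times t_p^q. -/
noncomputable def tpq (n : ℕ) (a : Fin n → Fin n → ℝ → ℝ) (p q : ℕ) : ℝ :=
  (nextTime n a)^[q] (tpSeq n a p)

open Classical in
/-- The ratio r_S(t) of reciprocal interaction weights across the cut (S, N∖S). -/
noncomputable def rS (n : ℕ) (a : Fin n → Fin n → ℝ → ℝ) (S : Finset (Fin n)) (t : ℝ) : ℝ≥0∞ :=
  if 0 < ∑ i ∈ S, ∑ j ∈ Sᶜ, a j i t then
    ENNReal.ofReal ((∑ i ∈ S, ∑ j ∈ Sᶜ, a i j t) / (∑ i ∈ S, ∑ j ∈ Sᶜ, a j i t))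
  else if (∑ i ∈ S, ∑ j ∈ Sᶜ, a i j t) = 0 then 1 else ⊤

/-- r(t): maximal ratio over nonempty proper subsets. -/
noncomputable def rmax (n : ℕ) (a : Fin n → Fin n → ℝ → ℝ) (t : ℝ) : ℝ≥0∞ :=
  ⨆ S ∈ {S : Finset (Fin n) | S.Nonempty ∧ S ≠ Finset.univ}, rS n a S t

/-- 𝐫(t) = sup_{s ∈ [0,t]} r(s). -/
noncomputable def rbold (n : ℕ) (a : Fin n → Fin n → ℝ → ℝ) (t : ℝ) : ℝ≥0∞ :=
  ⨆ s ∈ Set.Icc (0:ℝ) t, rmax n a s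

/-- σ_t sorts the pairs (x_i(t), i) lexicographically. -/
def IsSortingPerm (n : ℕ) (x : ℝ → Fin n → ℝ) (σ : ℝ → Equiv.Perm (Fin n)) : Prop :=
  ∀ t : ℝ, ∀ i j : Fin n, i < j →
    x t (σ t i) < x t (σ t j) ∨ (x t (σ t i) = x t (σ t j) ∧ σ t i < σ t j)

/-! ### Dissipation of weighted sums of sorted values -/

lemma sub_eq_sum_gaps {n : ℕ} (Y : ℕ → ℝ) {i j : ℕ} (hi : i < n) (hj : j < n) :
    Y j - Y i = ∑ k ∈ range n,
      (Y (k + 1) - Y k) * ((if k < j then 1 else 0) - (if k < i then 1 else 0)) := by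
  have h : ∀ m, m < n → Y m - Y 0 =
      ∑ k ∈ range n, (Y (k + 1) - Y k) * (if k < m then 1 else 0) := by
    intro m hm
    rw [← Finset.sum_range_sub Y m]
    simp only [mul_ite, mul_one, mul_zero]
    rw [← Finset.sum_filter]
    congr 1
    ext k
    simp only [mem_range, mem_filter]
    omega
  simp only [mul_sub, Finset.sum_sub_distrib]
  rw [← h j hj, ← h i hi]
  ring

/-- Lower bound for the coefficient of the gap between ranks `k` and `k + 1` in the drift: agents at
or below rank `k` are pulled up with weight at least `w k`, those above are pulled down with weight
at most `w (k + 1)`. -/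
lemma gap_coeff_lower {n : ℕ} (b : Fin n → Fin n → ℝ) (hb : ∀ i j, 0 ≤ b i j)
    (w : ℕ → ℝ) (hw : Antitone w) (hw0 : ∀ k, 0 ≤ w k) (r : ℝ)
    (k : ℕ)
    (hcut : (∑ i : Fin n, ∑ j : Fin n, if k < (i : ℕ) ∧ ¬ k < (j : ℕ) then b i j else 0) ≤
      r * ∑ i : Fin n, ∑ j : Fin n, if ¬ k < (i : ℕ) ∧ k < (j : ℕ) then b i j else 0) :
    (w k - r * w (k + 1)) *
      (∑ i : Fin n, ∑ j : Fin n, if ¬ k < (i : ℕ) ∧ k < (j : ℕ) then b i j else 0) ≤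
    ∑ i : Fin n, ∑ j : Fin n, w i * b i j *
      ((if k < (j : ℕ) then 1 else 0) - (if k < (i : ℕ) then 1 else 0)) := by
  have h1 : w k * (∑ i : Fin n, ∑ j : Fin n, if ¬ k < (i : ℕ) ∧ k < (j : ℕ) then b i j else 0)
      - w (k + 1) * (∑ i : Fin n, ∑ j : Fin n, if k < (i : ℕ) ∧ ¬ k < (j : ℕ) then b i j else 0)
      ≤ ∑ i : Fin n, ∑ j : Fin n, w i * b i j *
      ((if k < (j : ℕ) then 1 else 0) - (if k < (i : ℕ) then 1 else 0)) := by
    simp only [Finset.mul_sum]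
    rw [← Finset.sum_sub_distrib]
    refine Finset.sum_le_sum fun i _ => ?_
    rw [← Finset.sum_sub_distrib]
    refine Finset.sum_le_sum fun j _ => ?_
    by_cases hi : k < (i : ℕ) <;> by_cases hj : k < (j : ℕ) <;> simp [hi, hj]
    · exact mul_le_mul_of_nonneg_right (hw hi) (hb i j)
    · exact mul_le_mul_of_nonneg_right (hw (not_lt.mp hi)) (hb i j)
  have h2 := mul_le_mul_of_nonneg_left hcut (hw0 (k + 1))
  nlinarith

/-- If the weights `w` decrease by a factor of at least `r`, and the flow `b` across every
threshold `k` is `r`-reciprocal, then the consensus drift of the weighted sum of the sorted values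
`Y` is bounded below by the contribution of any single gap: every other gap contributes a
nonnegative amount. -/
lemma drift_lower {n : ℕ} (b : Fin n → Fin n → ℝ) (hb : ∀ i j, 0 ≤ b i j)
    (Y : ℕ → ℝ) (hY : Monotone Y)
    (w : ℕ → ℝ) (hw : Antitone w) (hw0 : ∀ k, 0 ≤ w k) (r : ℝ)
    (hwr : ∀ k, r * w (k + 1) ≤ w k)
    (hcut : ∀ k, (∑ i : Fin n, ∑ j : Fin n, if k < (i : ℕ) ∧ ¬ k < (j : ℕ) then b i j else 0) ≤
      r * ∑ i : Fin n, ∑ j : Fin n, if ¬ k < (i : ℕ) ∧ k < (j : ℕ) then b i j else 0)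
    (k : ℕ) (hk : k < n) :
    (w k - r * w (k + 1)) * (Y (k + 1) - Y k) *
      (∑ i : Fin n, ∑ j : Fin n, if ¬ k < (i : ℕ) ∧ k < (j : ℕ) then b i j else 0) ≤
    ∑ i : Fin n, ∑ j : Fin n, w i * b i j * (Y j - Y i) := by
  have hA : ∀ k : ℕ, 0 ≤
      (∑ i : Fin n, ∑ j : Fin n, if ¬ k < (i : ℕ) ∧ k < (j : ℕ) then b i j else 0) := fun k =>
    Finset.sum_nonneg fun i _ => Finset.sum_nonneg fun j _ => by
      split_ifs
      · exact hb i j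
      · exact le_rfl
  have hswap : ∑ i : Fin n, ∑ j : Fin n, w i * b i j * (Y j - Y i) =
      ∑ k ∈ range n, (Y (k + 1) - Y k) * ∑ i : Fin n, ∑ j : Fin n, w i * b i j *
        ((if k < (j : ℕ) then 1 else 0) - (if k < (i : ℕ) then 1 else 0)) := by
    simp only [Finset.mul_sum]
    rw [Finset.sum_comm (s := range n)]
    refine Finset.sum_congr rfl fun i _ => ?_
    rw [Finset.sum_comm (s := range n)]
    refine Finset.sum_congr rfl fun j _ => ?_
    rw [sub_eq_sum_gaps Y i.2 j.2, Finset.mul_sum]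
    exact Finset.sum_congr rfl fun k _ => by ring
  have hg : ∀ k, 0 ≤ Y (k + 1) - Y k := fun k => sub_nonneg.mpr (hY k.le_succ)
  have hterm : ∀ k, (w k - r * w (k + 1)) * (Y (k + 1) - Y k) *
      (∑ i : Fin n, ∑ j : Fin n, if ¬ k < (i : ℕ) ∧ k < (j : ℕ) then b i j else 0) ≤
      (Y (k + 1) - Y k) * ∑ i : Fin n, ∑ j : Fin n, w i * b i j *
        ((if k < (j : ℕ) then 1 else 0) - (if k < (i : ℕ) then 1 else 0)) := fun k => by
    have := mul_le_mul_of_nonneg_left (gap_coeff_lower b hb w hw hw0 r k (hcut k)) (hg k)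
    linarith
  rw [hswap]
  refine (hterm k).trans (Finset.single_le_sum
    (f := fun k => (Y (k + 1) - Y k) * ∑ i : Fin n, ∑ j : Fin n, w i * b i j *
        ((if k < (j : ℕ) then 1 else 0) - (if k < (i : ℕ) then 1 else 0)))
    (fun m _ => ?_) (mem_range.mpr hk))
  refine le_trans ?_ (hterm m)
  exact mul_nonneg (mul_nonneg (sub_nonneg.mpr (hwr m)) (hg m)) (hA m)

/-! ### Growth of the weighted sum along a trajectory -/

lemma sorted_mono {n : ℕ} {x : ℝ → Fin n → ℝ} {σ : ℝ → Equiv.Perm (Fin n)}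
    (hσ : IsSortingPerm n x σ) (t : ℝ) : Monotone fun i => x t (σ t i) := by
  intro i j hij
  rcases hij.eq_or_lt with rfl | h
  · exact le_rfl
  · rcases hσ t i j h with h | h
    · exact h.le
    · exact h.1.le

/-- Rearrangement: with decreasing weights, sorting in increasing order minimizes the weighted
sum. -/
lemma weighted_sorted_le {n : ℕ} {x : ℝ → Fin n → ℝ} {σ : ℝ → Equiv.Perm (Fin n)}
    (hσ : IsSortingPerm n x σ) (w : ℕ → ℝ) (hw : Antitone w) (t : ℝ)
    (π : Equiv.Perm (Fin n)) :
    ∑ i : Fin n, w i * x t (σ t i) ≤ ∑ i : Fin n, w i * x t (π i) := by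
  have hav : Antivary (fun i : Fin n => w i) (fun i => x t (σ t i)) :=
    Antitone.antivary (fun i j hij => hw hij) (sorted_mono hσ t)
  have := hav.sum_mul_le_sum_mul_comp_perm (σ := π.trans (σ t).symm)
  simpa using this

/-- The weighted sum of sorted values is Lipschitz in the state, hence absolutely continuous in
time. -/
lemma weighted_dist_le {n : ℕ} {x : ℝ → Fin n → ℝ} {σ : ℝ → Equiv.Perm (Fin n)}
    (hσ : IsSortingPerm n x σ) (w : ℕ → ℝ) (hw : Antitone w) (hw0 : ∀ k, 0 ≤ w k) (s t : ℝ) :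
    dist (∑ i : Fin n, w i * x s (σ s i)) (∑ i : Fin n, w i * x t (σ t i)) ≤
      w 0 * ∑ j : Fin n, dist (x s j) (x t j) := by
  have key : ∀ s t : ℝ, ∑ i : Fin n, w i * x s (σ s i) - ∑ i : Fin n, w i * x t (σ t i) ≤
      w 0 * ∑ j : Fin n, dist (x s j) (x t j) := by
    intro s t
    have h1 := weighted_sorted_le hσ w hw s (σ t)
    rw [← Equiv.sum_comp (σ t) (fun j => dist (x s j) (x t j)), Finset.mul_sum]
    refine (sub_le_sub_right h1 _).trans ?_
    rw [← Finset.sum_sub_distrib]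
    refine Finset.sum_le_sum fun i _ => ?_
    rw [← mul_sub]
    refine (mul_le_mul_of_nonneg_left (le_abs_self _) (hw0 i)).trans ?_
    exact mul_le_mul_of_nonneg_right (hw (Nat.zero_le _)) (abs_nonneg _)
  rw [Real.dist_eq, abs_le]
  refine ⟨?_, key s t⟩
  have := key t s
  simp only [dist_comm (x t _) (x s _)] at this
  linarith

/-- A function whose increments are dominated by those of finitely many absolutely continuous
functions is absolutely continuous. -/
lemma ac_sum {ι : Type*} (s : Finset ι) (f : ι → ℝ → ℝ) {a b : ℝ}
    (hf : ∀ i ∈ s, AbsolutelyContinuousOnInterval (f i) a b) {g : ℝ → ℝ} {C : ℝ}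
    (hg : ∀ u ∈ Set.uIcc a b, ∀ v ∈ Set.uIcc a b,
      dist (g u) (g v) ≤ C * ∑ i ∈ s, dist (f i u) (f i v)) :
    AbsolutelyContinuousOnInterval g a b := by
  unfold AbsolutelyContinuousOnInterval at *
  have h0 : Tendsto (fun E : ℕ × (ℕ → ℝ × ℝ) => C * ∑ i ∈ s,
      ∑ k ∈ Finset.range E.1, dist (f i (E.2 k).1) (f i (E.2 k).2))
      (AbsolutelyContinuousOnInterval.totalLengthFilter ⊓
        𝓟 (AbsolutelyContinuousOnInterval.disjWithin a b)) (nhds 0) := by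
    have := (tendsto_finsetSum s hf).const_mul C
    simpa using this
  refine squeeze_zero' (Eventually.of_forall fun E => Finset.sum_nonneg fun _ _ => dist_nonneg)
    ?_ h0
  filter_upwards [mem_inf_of_right (mem_principal_self _)] with E hE
  rw [Finset.sum_comm, Finset.mul_sum]
  exact Finset.sum_le_sum fun k hk => hg _ (hE.1 k hk).1 _ (hE.1 k hk).2

/-- The weighted sum of sorted values grows at least by the integral of any integrable lower bound
`g` of its drift. It is absolutely continuous, and almost everywhere its derivative is that of the
sum with the permutation frozen at the current time. -/
lemma growth {n : ℕ} {a : Fin n → Fin n → ℝ → ℝ}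
    {x : ℝ → Fin n → ℝ} (hx : IsTrajectory n a x)
    {σ : ℝ → Equiv.Perm (Fin n)} (hσ : IsSortingPerm n x σ)
    (w : ℕ → ℝ) (hw : Antitone w) (hw0 : ∀ k, 0 ≤ w k) {t₁ t₂ : ℝ} (h0 : 0 ≤ t₁) (h12 : t₁ ≤ t₂)
    (g : ℝ → ℝ) (hgi : IntervalIntegrable g volume t₁ t₂)
    (hg : ∀ t ∈ Set.Icc t₁ t₂, g t ≤
      ∑ i : Fin n, w i * ∑ j : Fin n, a (σ t i) j t * (x t j - x t (σ t i))) :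
    ∫ t in t₁..t₂, g t ≤ ∑ i : Fin n, w i * x t₂ (σ t₂ i) - ∑ i : Fin n, w i * x t₁ (σ t₁ i) := by
  set V : ℝ → ℝ := fun t => ∑ i : Fin n, w i * x t (σ t i) with hV
  have h02 : 0 ≤ t₂ := h0.trans h12
  have hsub : Set.uIcc t₁ t₂ ⊆ Set.uIcc 0 t₂ := by
    rw [Set.uIcc_of_le h12, Set.uIcc_of_le h02]
    exact Set.Icc_subset_Icc_left h0
  have hintg : ∀ i, IntervalIntegrable (fun s => ∑ j : Fin n, a i j s * (x s j - x s i))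
      volume 0 t₂ := fun i => (hx.2 i t₂ h02).1
  have hxac : ∀ i, AbsolutelyContinuousOnInterval
      (fun t => ∫ s in (0:ℝ)..t, ∑ j : Fin n, a i j s * (x s j - x s i)) t₁ t₂ := fun i =>
    ((hintg i).absolutelyContinuousOnInterval_intervalIntegral (by simp)).mono hsub
  have hac : AbsolutelyContinuousOnInterval V t₁ t₂ := by
    refine ac_sum univ _ (fun i _ => hxac i) (C := w 0) ?_
    intro u hu v hv
    have hu0 : 0 ≤ u := by
      rw [Set.uIcc_of_le h12] at hu
      exact h0.trans hu.1
    have hv0 : 0 ≤ v := by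
      rw [Set.uIcc_of_le h12] at hv
      exact h0.trans hv.1
    refine (weighted_dist_le hσ w hw hw0 u v).trans (le_of_eq ?_)
    congr 1
    refine Finset.sum_congr rfl fun j _ => ?_
    rw [(hx.2 j u hu0).2, (hx.2 j v hv0).2, dist_add_left]
  change _ ≤ V t₂ - V t₁
  rw [← hac.integral_deriv_eq_sub]
  refine intervalIntegral.integral_mono_ae_restrict h12 hgi hac.intervalIntegrable_deriv ?_
  have hder : ∀ᵐ t, ∀ i, t ∈ Set.uIcc 0 t₂ → ∀ c ∈ Set.uIcc 0 t₂,
      HasDerivAt (fun t => ∫ s in c..t, ∑ j : Fin n, a i j s * (x s j - x s i))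
        (∑ j : Fin n, a i j t * (x t j - x t i)) t :=
    ae_all_iff.mpr fun i => (hintg i).ae_hasDerivAt_integral
  have hne1 : ∀ᵐ t : ℝ, t ≠ t₁ := by simp [ae_iff, measure_singleton]
  rw [EventuallyLE, ae_restrict_iff' measurableSet_Icc]
  filter_upwards [hder, hne1, hac.ae_differentiableAt] with t ht hn1 hd hmem
  have htpos : 0 < t := h0.trans_lt (lt_of_le_of_ne hmem.1 (Ne.symm hn1))
  have hmem' : t ∈ Set.uIcc t₁ t₂ := by rwa [Set.uIcc_of_le h12]
  have hxd : ∀ i, HasDerivAt (fun t => x t i) (∑ j : Fin n, a i j t * (x t j - x t i)) t := by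
    intro i
    have h := (ht i (hsub hmem') 0 (by simp)).const_add (x 0 i)
    refine h.congr_of_eventuallyEq ?_
    filter_upwards [lt_mem_nhds htpos] with s hs
    exact (hx.2 i s hs.le).2
  have hF : HasDerivAt (fun s => ∑ i : Fin n, w i * x s (σ t i))
      (∑ i : Fin n, w i * ∑ j : Fin n, a (σ t i) j t * (x t j - x t (σ t i))) t := by
    have := HasDerivAt.fun_sum (u := univ) (x := t)
      (A := fun (i : Fin n) s => w i * x s (σ t i)) fun i _ => (hxd (σ t i)).const_mul (w i)
    exact this
  have hVd : HasDerivAt V (deriv V t) t := (hd hmem').hasDerivAt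
  -- `V` lies below the fixed-permutation sum and touches it at time `t`.
  have hmax : IsLocalMax (fun s => V s - ∑ i : Fin n, w i * x s (σ t i)) t := by
    refine Eventually.of_forall fun s => ?_
    have := weighted_sorted_le hσ w hw s (σ t)
    simp only [hV]
    linarith
  have h0 := hmax.hasDerivAt_eq_zero (hVd.sub hF)
  have := hg t hmem
  linarith

/-! ### Reciprocity across cuts -/

lemma rS_le_rbold {n : ℕ} {a : Fin n → Fin n → ℝ → ℝ} {T t : ℝ} (ht : t ∈ Set.Icc 0 T)
    {S : Finset (Fin n)} (hS : S.Nonempty) (hS' : S ≠ univ) : rS n a S t ≤ rbold n a T := by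
  refine le_trans ?_ (le_iSup₂ (f := fun s (_ : s ∈ Set.Icc (0:ℝ) T) => rmax n a s) t ht)
  exact le_iSup₂ (f := fun S (_ : S ∈ {S : Finset (Fin n) | S.Nonempty ∧ S ≠ Finset.univ}) =>
    rS n a S t) S ⟨hS, hS'⟩

/-- Reciprocity with factor `𝐫(T)`, for every set `S`; for the empty and the full set both sides
vanish. -/
lemma cut_le {n : ℕ} {a : Fin n → Fin n → ℝ → ℝ} (ha : IsWeight n a) {T t : ℝ}
    (hT : rbold n a T ≠ ⊤) (ht : t ∈ Set.Icc 0 T) (S : Finset (Fin n)) :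
    ∑ i ∈ S, ∑ j ∈ Sᶜ, a i j t ≤ (rbold n a T).toReal * ∑ i ∈ S, ∑ j ∈ Sᶜ, a j i t := by
  rcases S.eq_empty_or_nonempty with rfl | hS
  · simp
  by_cases hS' : S = univ
  · subst hS'
    simp
  have h := rS_le_rbold (a := a) ht hS hS'
  have hD : 0 ≤ ∑ i ∈ S, ∑ j ∈ Sᶜ, a j i t :=
    Finset.sum_nonneg fun i _ => Finset.sum_nonneg fun j _ => (ha j i).1 t
  unfold rS at h
  split_ifs at h with h1 h2
  · rw [ENNReal.ofReal_le_iff_le_toReal hT] at h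
    rwa [div_le_iff₀ h1] at h
  · rw [h2]
    exact mul_nonneg ENNReal.toReal_nonneg hD
  · exact absurd (top_le_iff.mp h) hT

/-- The ratios of a cut and of its complement are inverse to each other, so their maximum is at
least one. -/
lemma one_le_rbold {n : ℕ} (hn : 2 ≤ n) {a : Fin n → Fin n → ℝ → ℝ} (ha : IsWeight n a) {T : ℝ}
    (h0 : 0 ≤ T) (hT : rbold n a T ≠ ⊤) : 1 ≤ (rbold n a T).toReal := by
  set S : Finset (Fin n) := {⟨0, by omega⟩} with hSdef
  have hS : S.Nonempty := by simp [hSdef]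
  have hS' : S ≠ univ := by
    intro h
    have := congrArg Finset.card h
    simp [hSdef] at this
    omega
  have ht : (0:ℝ) ∈ Set.Icc 0 T := ⟨le_rfl, h0⟩
  have h1 := cut_le ha hT ht S
  have h2 := cut_le ha hT ht Sᶜ
  rw [compl_compl, Finset.sum_comm, Finset.sum_comm (s := Sᶜ)] at h2
  have h3 := rS_le_rbold (a := a) ht hS hS'
  set r := (rbold n a T).toReal with hr
  have hr0 : 0 ≤ r := ENNReal.toReal_nonneg
  have hN : 0 ≤ ∑ i ∈ S, ∑ j ∈ Sᶜ, a i j 0 :=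
    Finset.sum_nonneg fun i _ => Finset.sum_nonneg fun j _ => (ha i j).1 0
  unfold rS at h3
  split_ifs at h3 with h4 h5
  · by_contra! hlt
    nlinarith
  · have := ENNReal.toReal_mono hT h3
    simpa using this
  · exact absurd (top_le_iff.mp h3) hT

/-! ### The rescaling times -/

lemma weight_integrable {n : ℕ} {a : Fin n → Fin n → ℝ → ℝ} (ha : IsWeight n a) (i j : Fin n)
    (u v : ℝ) : IntervalIntegrable (a i j) volume u v :=
  ((ha i j).2.2 u).symm.trans ((ha i j).2.2 v)

lemma continuous_cutSum {n : ℕ} {a : Fin n → Fin n → ℝ → ℝ} (ha : IsWeight n a)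
    (S : Finset (Fin n)) (t0 : ℝ) : Continuous (cutSum n a S t0) := by
  unfold cutSum
  exact continuous_finsetSum _ fun i _ => continuous_finsetSum _ fun j _ =>
    intervalIntegral.continuous_primitive (weight_integrable ha i j) t0

lemma integral_weight_mono {n : ℕ} {a : Fin n → Fin n → ℝ → ℝ} (ha : IsWeight n a)
    (i j : Fin n) {s t u : ℝ} (hst : s ≤ t) :
    ∫ v in t..u, a i j v ≤ ∫ v in s..u, a i j v := by
  rw [← intervalIntegral.integral_add_adjacent_intervals (weight_integrable ha i j s t)
    (weight_integrable ha i j t u)]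
  have := intervalIntegral.integral_nonneg (μ := volume) hst fun v _ => (ha i j).1 v
  linarith

lemma exists_cut_edge {n : ℕ} {a : Fin n → Fin n → ℝ → ℝ} (hconn : PersistentConn n a)
    {S : Finset (Fin n)} (hS : S.Nonempty) (hS' : S ≠ univ) :
    ∃ i ∈ S, ∃ j ∈ Sᶜ, ∫⁻ s in Set.Ioi (0:ℝ), ENNReal.ofReal (a i j s) = ⊤ := by
  obtain ⟨v, hv⟩ := hS
  obtain ⟨u, hu⟩ : ∃ u, u ∉ S := by
    by_contra! h
    exact hS' (Finset.eq_univ_iff_forall.mpr h)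
  by_contra! hno
  have : ∀ z, Relation.ReflTransGen
      (fun j i => ∫⁻ s in Set.Ioi (0:ℝ), ENNReal.ofReal (a i j s) = ⊤) u z → z ∉ S := by
    intro z hz
    induction hz with
    | refl => exact hu
    | tail _ h ih => exact fun hc => hno _ hc _ (Finset.mem_compl.mpr ih) h
  exact this v (hconn u v) hv

lemma exists_cutSum_ge {n : ℕ} {a : Fin n → Fin n → ℝ → ℝ} (ha : IsWeight n a)
    (hconn : PersistentConn n a) {S : Finset (Fin n)} (hS : S.Nonempty) (hS' : S ≠ univ)
    (t0 : ℝ) : ∃ T, t0 ≤ T ∧ ∀ t, T ≤ t → 1 ≤ cutSum n a S t0 t := by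
  obtain ⟨i, hi, j, hj, htop⟩ := exists_cut_edge hconn hS hS'
  have hle : ∀ t, t0 ≤ t → ∫ s in t0..t, a i j s ≤ cutSum n a S t0 t := by
    intro t ht
    have hnn : ∀ i j, 0 ≤ ∫ s in t0..t, a i j s := fun i j =>
      intervalIntegral.integral_nonneg ht fun v _ => (ha i j).1 v
    unfold cutSum
    refine (Finset.single_le_sum (f := fun j => ∫ s in t0..t, a i j s)
      (fun j _ => hnn i j) hj).trans ?_
    exact Finset.single_le_sum (f := fun i => ∑ j ∈ Sᶜ, ∫ s in t0..t, a i j s)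
      (fun i _ => Finset.sum_nonneg fun j _ => hnn i j) hi
  obtain ⟨T, hT0, hT⟩ : ∃ T, t0 ≤ T ∧ 1 ≤ ∫ s in t0..T, a i j s := by
    by_contra! hlt
    have hI : IntegrableOn (a i j) (Set.Ioi 0) volume := by
      refine integrableOn_Ioi_of_intervalIntegral_norm_bounded
        ((∫ s in (0:ℝ)..t0, a i j s) + 1) 0 (b := fun t : ℝ => t) (l := atTop) (fun t => ?_)
        tendsto_id ?_
      · rcases le_total 0 t with h | h
        · exact (intervalIntegrable_iff_integrableOn_Ioc_of_le h).mp ((ha i j).2.2 t)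
        · simp [Set.Ioc_eq_empty (not_lt.mpr h)]
      · filter_upwards [eventually_ge_atTop t0] with t ht
        have h1 : ∫ s in (0:ℝ)..t, ‖a i j s‖ = ∫ s in (0:ℝ)..t, a i j s :=
          intervalIntegral.integral_congr fun s _ => Real.norm_of_nonneg ((ha i j).1 s)
        rw [h1, ← intervalIntegral.integral_add_adjacent_intervals
          (weight_integrable ha i j 0 t0) (weight_integrable ha i j t0 t)]
        linarith [hlt t ht]
    exact (Integrable.lintegral_lt_top hI).ne htop
  refine ⟨T, hT0, fun t ht => (hT.trans ?_).trans (hle t (hT0.trans ht))⟩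
  rw [← intervalIntegral.integral_add_adjacent_intervals
          (weight_integrable ha i j t0 T) (weight_integrable ha i j T t)]
  have := intervalIntegral.integral_nonneg (μ := volume) ht fun v _ => (ha i j).1 v
  linarith

open Classical in
/-- The nonempty proper subsets, as a finset. -/
noncomputable def properCuts (n : ℕ) : Finset (Finset (Fin n)) :=
  univ.filter fun S => S.Nonempty ∧ S ≠ univ

lemma properCuts_nonempty {n : ℕ} (hn : 2 ≤ n) : (properCuts n).Nonempty := by
  refine ⟨{⟨0, by omega⟩}, ?_⟩
  simp only [properCuts, mem_filter, mem_univ, true_and, singleton_nonempty]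
  intro h
  have := congrArg Finset.card h
  simp at this
  omega

lemma minCut_eq {n : ℕ} (hn : 2 ≤ n) (a : Fin n → Fin n → ℝ → ℝ) (t0 t : ℝ) :
    minCut n a t0 t =
      (properCuts n).inf' (properCuts_nonempty hn) fun S => cutSum n a S t0 t := by
  rw [Finset.inf'_eq_csInf_image, minCut]
  congr 2
  ext S
  simp [properCuts]

lemma nextTime_spec {n : ℕ} (hn : 2 ≤ n) {a : Fin n → Fin n → ℝ → ℝ} (ha : IsWeight n a)
    (hconn : PersistentConn n a) (t0 : ℝ) :
    t0 ≤ nextTime n a t0 ∧ minCut n a t0 (nextTime n a t0) = 1 := by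
  have hcont : Continuous (minCut n a t0) := by
    have : minCut n a t0 = fun t =>
        (properCuts n).inf' (properCuts_nonempty hn) fun S => cutSum n a S t0 t :=
      funext fun t => minCut_eq hn a t0 t
    rw [this]
    exact Continuous.finset_inf'_apply _ fun S _ => continuous_cutSum ha S t0
  have hzero : minCut n a t0 t0 = 0 := by
    rw [minCut_eq hn]
    simp [cutSum]
  obtain ⟨T, hT0, hT⟩ : ∃ T, t0 ≤ T ∧ 1 ≤ minCut n a t0 T := by
    have h : ∀ S : Finset (Fin n), ∃ T, S.Nonempty → S ≠ univ →
        t0 ≤ T ∧ ∀ t, T ≤ t → 1 ≤ cutSum n a S t0 t := by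
      intro S
      by_cases hS : S.Nonempty ∧ S ≠ univ
      · obtain ⟨T, hT⟩ := exists_cutSum_ge ha hconn hS.1 hS.2 t0
        exact ⟨T, fun _ _ => hT⟩
      · exact ⟨0, fun h1 h2 => absurd ⟨h1, h2⟩ hS⟩
    choose F hF using h
    obtain ⟨M, hM⟩ := (Set.finite_range F).bddAbove
    refine ⟨max t0 M, le_max_left _ _, ?_⟩
    rw [minCut_eq hn, Finset.le_inf'_iff]
    intro S hS
    simp only [properCuts, mem_filter, mem_univ, true_and] at hS
    exact (hF S hS.1 hS.2).2 _ ((hM ⟨S, rfl⟩).trans (le_max_right _ _))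
  have hne : {t : ℝ | t0 ≤ t ∧ minCut n a t0 t = 1}.Nonempty := by
    obtain ⟨t, ht, h⟩ := intermediate_value_Icc hT0 hcont.continuousOn
      (show (1:ℝ) ∈ Set.Icc _ _ from ⟨by rw [hzero]; exact zero_le_one, hT⟩)
    exact ⟨t, ht.1, h⟩
  have hclosed : IsClosed {t : ℝ | t0 ≤ t ∧ minCut n a t0 t = 1} :=
    (isClosed_le continuous_const continuous_id).inter (isClosed_eq hcont continuous_const)
  exact hclosed.csInf_mem hne ⟨t0, fun t ht => ht.1⟩

lemma one_le_cutSum_nextTime {n : ℕ} (hn : 2 ≤ n) {a : Fin n → Fin n → ℝ → ℝ}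
    (ha : IsWeight n a) (hconn : PersistentConn n a) (t0 : ℝ) {S : Finset (Fin n)}
    (hS : S.Nonempty) (hS' : S ≠ univ) : 1 ≤ cutSum n a S t0 (nextTime n a t0) := by
  rw [← (nextTime_spec hn ha hconn t0).2, minCut_eq hn]
  exact Finset.inf'_le (fun S => cutSum n a S t0 (nextTime n a t0))
    (by simp [properCuts, hS, hS'])

lemma tpq_mono {n : ℕ} (hn : 2 ≤ n) {a : Fin n → Fin n → ℝ → ℝ} (ha : IsWeight n a)
    (hconn : PersistentConn n a) (p : ℕ) : Monotone (tpq n a p) := by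
  have h := Function.monotone_iterate_of_id_le
    (f := nextTime n a) fun t => (nextTime_spec hn ha hconn t).1
  exact fun q q' hq => h hq (tpSeq n a p)

lemma tpSeq_succ (n : ℕ) (a : Fin n → Fin n → ℝ → ℝ) (p : ℕ) :
    tpSeq n a (p + 1) = tpq n a p (n / 2) := by
  simp only [tpSeq, tpq, Function.iterate_succ_apply']

lemma tpSeq_nonneg {n : ℕ} (hn : 2 ≤ n) {a : Fin n → Fin n → ℝ → ℝ} (ha : IsWeight n a)
    (hconn : PersistentConn n a) (p : ℕ) : 0 ≤ tpSeq n a p := by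
  induction p with
  | zero => simp [tpSeq]
  | succ p ih =>
    rw [tpSeq_succ]
    exact ih.trans (tpq_mono hn ha hconn p (Nat.zero_le _))

/-! ### Drift along the trajectory -/

/-- The `k`-th smallest agent value at time `t` (counting from zero), extended to all `k` by the
largest value. -/
noncomputable def sortedVal {n : ℕ} (hn : 2 ≤ n) (x : ℝ → Fin n → ℝ)
    (σ : ℝ → Equiv.Perm (Fin n)) (t : ℝ) (k : ℕ) : ℝ :=
  x t (σ t ⟨min k (n - 1), by omega⟩)

lemma sortedVal_eq {n : ℕ} (hn : 2 ≤ n) (x : ℝ → Fin n → ℝ)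
    (σ : ℝ → Equiv.Perm (Fin n)) (t : ℝ) (k : ℕ) (hk : k < n) :
    x t (σ t ⟨k, hk⟩) = sortedVal hn x σ t k := by
  have : min k (n - 1) = k := by omega
  simp only [sortedVal, this]

lemma sortedVal_mono {n : ℕ} (hn : 2 ≤ n) {x : ℝ → Fin n → ℝ}
    {σ : ℝ → Equiv.Perm (Fin n)} (hσ : IsSortingPerm n x σ) (t : ℝ) :
    Monotone (sortedVal hn x σ t) := fun i j hij =>
  sorted_mono hσ t (Fin.mk_le_mk.mpr (by omega))

lemma weighted_eq {n : ℕ} (hn : 2 ≤ n) (x : ℝ → Fin n → ℝ)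
    (σ : ℝ → Equiv.Perm (Fin n)) (w : ℕ → ℝ) (t : ℝ) :
    ∑ i : Fin n, w i * x t (σ t i) = ∑ k ∈ range n, w k * sortedVal hn x σ t k := by
  rw [← Fin.sum_univ_eq_sum_range (fun k => w k * sortedVal hn x σ t k)]
  exact Finset.sum_congr rfl fun i _ => by rw [← sortedVal_eq hn x σ t i i.2]

lemma sum_cut_reindex {n : ℕ} (π : Equiv.Perm (Fin n)) (P : Fin n → Prop) [DecidablePred P]
    (c : Fin n → Fin n → ℝ) :
    (∑ i : Fin n, ∑ j : Fin n, if P i ∧ ¬ P j then c (π i) (π j) else 0) =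
      ∑ i ∈ univ.filter (fun i => P (π.symm i)),
        ∑ j ∈ (univ.filter (fun i => P (π.symm i)))ᶜ, c i j := by
  symm
  rw [Finset.compl_filter, Finset.sum_filter, ← Equiv.sum_comp π]
  refine Finset.sum_congr rfl fun i _ => ?_
  rw [Finset.sum_filter, ← Equiv.sum_comp π]
  by_cases h : P i <;> simp [h]

/-- `drift_lower` along the trajectory, with the crossing flow written over the actual set of agents
of rank at most `k`. -/
lemma traj_drift {n : ℕ} (hn : 2 ≤ n) {a : Fin n → Fin n → ℝ → ℝ} (ha : IsWeight n a)
    {x : ℝ → Fin n → ℝ} {σ : ℝ → Equiv.Perm (Fin n)} (hσ : IsSortingPerm n x σ)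
    (w : ℕ → ℝ) (hw : Antitone w) (hw0 : ∀ k, 0 ≤ w k) {T t : ℝ}
    (hT : rbold n a T ≠ ⊤) (ht : t ∈ Set.Icc 0 T)
    (hwr : ∀ k, (rbold n a T).toReal * w (k + 1) ≤ w k) (k : ℕ) (hk : k < n) :
    (w k - (rbold n a T).toReal * w (k + 1)) *
      (sortedVal hn x σ t (k + 1) - sortedVal hn x σ t k) *
      (∑ i ∈ univ.filter (fun i => ¬ k < ((σ t).symm i : ℕ)),
        ∑ j ∈ (univ.filter (fun i => ¬ k < ((σ t).symm i : ℕ)))ᶜ, a i j t) ≤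
    ∑ i : Fin n, w i * ∑ j : Fin n, a (σ t i) j t * (x t j - x t (σ t i)) := by
  have h := drift_lower (fun i j => a (σ t i) (σ t j) t) (fun i j => (ha _ _).1 t)
    (sortedVal hn x σ t) (sortedVal_mono hn hσ t) w hw hw0 _ hwr (fun k => ?_) k hk
  · have e1 := sum_cut_reindex (σ t) (fun i => ¬ k < (i : ℕ)) (fun i j => a i j t)
    simp only [not_not] at e1
    rw [e1] at h
    refine h.trans (le_of_eq ?_)
    symm
    refine Finset.sum_congr rfl fun i _ => ?_
    rw [← Equiv.sum_comp (σ t), Finset.mul_sum]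
    refine Finset.sum_congr rfl fun j _ => ?_
    rw [← sortedVal_eq hn x σ t i i.2, ← sortedVal_eq hn x σ t j j.2]
    ring
  · have e1 := sum_cut_reindex (σ t) (fun i => k < (i : ℕ)) (fun i j => a i j t)
    have e2 := sum_cut_reindex (σ t) (fun i => k < (i : ℕ)) (fun i j => a j i t)
    have e3 : (∑ i : Fin n, ∑ j : Fin n,
        if ¬ k < (i : ℕ) ∧ k < (j : ℕ) then a (σ t i) (σ t j) t else 0) =
        ∑ i : Fin n, ∑ j : Fin n,
          if k < (i : ℕ) ∧ ¬ k < (j : ℕ) then a (σ t j) (σ t i) t else 0 := by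
      rw [Finset.sum_comm]
      simp only [and_comm]
    rw [e3, e1, e2]
    exact cut_le ha hT ht _

/-! ### Geometric weights truncated at rank `m` -/

/-- The weights `ρ, ρ², …, ρ^m` on the `m` smallest values, and zero on the others. -/
noncomputable def truncGeom (ρ : ℝ) (m k : ℕ) : ℝ := if k < m then ρ ^ (k + 1) else 0

lemma truncGeom_nonneg {ρ : ℝ} (h0 : 0 ≤ ρ) (m k : ℕ) : 0 ≤ truncGeom ρ m k := by
  unfold truncGeom
  split_ifs <;> positivity

lemma truncGeom_antitone {ρ : ℝ} (h0 : 0 ≤ ρ) (h1 : ρ ≤ 1) (m : ℕ) :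
    Antitone (truncGeom ρ m) := by
  refine antitone_nat_of_succ_le fun k => ?_
  unfold truncGeom
  split_ifs with h h'
  · exact pow_le_pow_of_le_one h0 h1 (by omega)
  · omega
  · positivity
  · exact le_rfl

lemma truncGeom_step {r : ℝ} (hr : 1 ≤ r) (m k : ℕ) :
    r * truncGeom r⁻¹ m (k + 1) ≤ truncGeom r⁻¹ m k := by
  have hr0 : r ≠ 0 := by positivity
  have hr1 : 0 ≤ r := by positivity
  unfold truncGeom
  split_ifs with h h'
  · rw [pow_succ' _ (k + 1), mul_inv_cancel_left₀ hr0]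
  · omega
  · rw [mul_zero]; positivity
  · simp

lemma sum_truncGeom {ρ : ℝ} {m n : ℕ} (hmn : m ≤ n) (f : ℕ → ℝ) :
    ∑ k ∈ range n, truncGeom ρ m k * f k = ∑ k ∈ range m, ρ ^ (k + 1) * f k := by
  simp only [truncGeom, ite_mul, zero_mul]
  rw [← Finset.sum_filter]
  congr 1
  ext k
  simp only [mem_range, mem_filter]
  omega

/-! ### Consequences of the absence of new gaps -/

/-- If the lowest value has risen by at most `ρ^l ε₁` and the gaps below rank `l` are small at a
geometric scale, then the `m`-th value is close to the initial lowest value. -/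
lemma sorted_rise_le {Y : ℕ → ℝ} {y0 ρ ε₁ ε₂ : ℝ} {l : ℕ} (h0 : 0 < ρ) (h1 : ρ ≤ 1)
    (hε₂ : 0 ≤ ε₂) (hlow : Y 0 - y0 ≤ ρ ^ l * ε₁)
    (hgaps : ∀ m, m + 1 < l → Y (m + 1) - Y m ≤ ρ ^ (l - (m + 1)) * ε₂) :
    ∀ m, m < l → Y m - y0 ≤ ρ ^ l * ε₁ + m * ρ ^ (l - m) * ε₂ := by
  intro m
  induction m with
  | zero => intro _; simpa using hlow
  | succ m ih =>
    intro hm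
    have h2 := ih (by omega)
    have h3 := hgaps m hm
    have h4 : ρ ^ (l - m) ≤ ρ ^ (l - (m + 1)) := pow_le_pow_of_le_one h0.le h1 (by omega)
    have h5 : (m:ℝ) * ρ ^ (l - m) * ε₂ ≤ m * ρ ^ (l - (m + 1)) * ε₂ := by gcongr
    push_cast
    linarith

/-- The geometric weights compensate the geometric scale of the gaps, with one factor `ρ` to spare:
this extra factor is what keeps the value of rank `l` from dropping in `no_small_rise`. -/
lemma weighted_rise_le {Y Z : ℕ → ℝ} {ρ δ : ℝ} {l n : ℕ} (h0 : 0 < ρ) (h1 : ρ ≤ 1)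
    (hδ : 0 ≤ δ) (hln : l ≤ n) (hn : 0 < n) (hZ : Monotone Z)
    (hrise : ∀ m, m < l →
      Y m - Z 0 ≤ ρ ^ l * (δ / (8 * n)) + m * ρ ^ (l - m) * (δ / (8 * n ^ 2))) :
    ∑ k ∈ range l, ρ ^ (k + 1) * (Y k - Z k) ≤ ρ ^ (l + 1) * (δ / 4) := by
  have hn' : (0:ℝ) < n := by exact_mod_cast hn
  have hterm : ∀ k ∈ range l, ρ ^ (k + 1) * (Y k - Z k) ≤ ρ ^ (l + 1) * (δ / (4 * n)) := by
    intro k hk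
    have hk' : k < l := mem_range.mp hk
    have hkn : (k:ℝ) ≤ n := by exact_mod_cast (hk'.le.trans hln)
    have h2 : Y k - Z k ≤ ρ ^ l * (δ / (8 * n)) + k * ρ ^ (l - k) * (δ / (8 * n ^ 2)) := by
      linarith [hrise k hk', hZ (Nat.zero_le k)]
    refine (mul_le_mul_of_nonneg_left h2 (by positivity)).trans ?_
    have h3 : ρ ^ (k + 1) * ρ ^ l ≤ ρ ^ (l + 1) := by
      rw [← pow_add]
      exact pow_le_pow_of_le_one h0.le h1 (by omega)
    have h4 : ρ ^ (k + 1) * ρ ^ (l - k) = ρ ^ (l + 1) := by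
      rw [← pow_add]
      congr 1
      omega
    have h5 : (k:ℝ) * (δ / (8 * n ^ 2)) ≤ n * (δ / (8 * n ^ 2)) := by gcongr
    have h6 : (n:ℝ) * (δ / (8 * n ^ 2)) = δ / (8 * n) := by field_simp
    have h7 : δ / (4 * n) = δ / (8 * n) + δ / (8 * n) := by field_simp; ring
    calc ρ ^ (k + 1) * (ρ ^ l * (δ / (8 * n)) + k * ρ ^ (l - k) * (δ / (8 * n ^ 2)))
        = (ρ ^ (k + 1) * ρ ^ l) * (δ / (8 * n)) +
            (ρ ^ (k + 1) * ρ ^ (l - k)) * (k * (δ / (8 * n ^ 2))) := by ring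
      _ ≤ ρ ^ (l + 1) * (δ / (8 * n)) + ρ ^ (l + 1) * (δ / (8 * n)) := by
          rw [h4]
          gcongr
          exact h5.trans h6.le
      _ = ρ ^ (l + 1) * (δ / (4 * n)) := by rw [h7]; ring
  refine (Finset.sum_le_sum hterm).trans ?_
  rw [Finset.sum_const, card_range, nsmul_eq_mul]
  have hl' : (l:ℝ) ≤ n := by exact_mod_cast hln
  calc (l:ℝ) * (ρ ^ (l + 1) * (δ / (4 * n))) ≤ n * (ρ ^ (l + 1) * (δ / (4 * n))) := by gcongr
    _ = ρ ^ (l + 1) * (δ / 4) := by field_simp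

/-- If on `[t₁, t₂]` the values of ranks `≤ k` stay below a fixed level `c` and those of ranks
`> k` stay above it, then the set of agents of rank `≤ k` does not change. -/
lemma low_set_const {n : ℕ} (hn : 2 ≤ n) {a : Fin n → Fin n → ℝ → ℝ}
    {x : ℝ → Fin n → ℝ} (hx : IsTrajectory n a x)
    {σ : ℝ → Equiv.Perm (Fin n)} (hσ : IsSortingPerm n x σ) {t₁ t₂ c : ℝ} (h0 : 0 ≤ t₁) {k : ℕ}
    (hlo : ∀ t ∈ Set.Icc t₁ t₂, sortedVal hn x σ t k < c)
    (hhi : ∀ t ∈ Set.Icc t₁ t₂, c < sortedVal hn x σ t (k + 1)) {t : ℝ}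
    (ht : t ∈ Set.Icc t₁ t₂) :
    (univ.filter fun i => ¬ k < ((σ t).symm i : ℕ)) =
      univ.filter fun i => ¬ k < ((σ t₁).symm i : ℕ) := by
  have hval : ∀ s i, x s i = sortedVal hn x σ s ((σ s).symm i : ℕ) := fun s i => by
    rw [← sortedVal_eq hn x σ s _ ((σ s).symm i).2]
    simp
  have hl : ∀ s ∈ Set.Icc t₁ t₂, ∀ i, ¬ k < ((σ s).symm i : ℕ) → x s i < c := fun s hs i hi => by
    rw [hval]
    exact (sortedVal_mono hn hσ s (not_lt.mp hi)).trans_lt (hlo s hs)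
  have hh : ∀ s ∈ Set.Icc t₁ t₂, ∀ i, k < ((σ s).symm i : ℕ) → c < x s i := fun s hs i hi => by
    rw [hval]
    exact (hhi s hs).trans_le (sortedVal_mono hn hσ s hi)
  have hne : ∀ s ∈ Set.Icc t₁ t₂, ∀ i, x s i ≠ c := fun s hs i => by
    by_cases h : k < ((σ s).symm i : ℕ)
    · exact (hh s hs i h).ne'
    · exact (hl s hs i h).ne
  have ht₁ : t₁ ∈ Set.Icc t₁ t₂ := ⟨le_rfl, ht.1.trans ht.2⟩
  ext i
  simp only [mem_filter, mem_univ, true_and]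
  have hcont : ContinuousOn (fun s => x s i) (Set.Icc t₁ t) :=
    (hx.1 i).mono fun s hs => h0.trans hs.1
  constructor
  · intro h1 h2
    obtain ⟨s, hs, hs'⟩ := intermediate_value_Icc' ht.1 hcont
      ⟨(hl t ht i h1).le, (hh t₁ ht₁ i h2).le⟩
    exact hne s ⟨hs.1, hs.2.trans ht.2⟩ i hs'
  · intro h1 h2
    obtain ⟨s, hs, hs'⟩ := intermediate_value_Icc ht.1 hcont
      ⟨(hl t₁ ht₁ i h1).le, (hh t ht i h2).le⟩
    exact hne s ⟨hs.1, hs.2.trans ht.2⟩ i hs'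

/-- On `[τ, T]`, small rises of the `k + 1` lowest values are incompatible with an initial gap `δ`
above them and a unit amount of flow across every cut. -/
lemma no_small_rise {n : ℕ} (hn : 2 ≤ n) {a : Fin n → Fin n → ℝ → ℝ} (ha : IsWeight n a)
    {x : ℝ → Fin n → ℝ} (hx : IsTrajectory n a x)
    {σ : ℝ → Equiv.Perm (Fin n)} (hσ : IsSortingPerm n x σ)
    {T' : ℝ} (hfin : rbold n a T' ≠ ⊤) (hr : 1 ≤ (rbold n a T').toReal)
    {τ s₀ T : ℝ} (hτ0 : 0 ≤ τ) (hτs : τ ≤ s₀) (hsT : s₀ ≤ T) (hTT' : T ≤ T')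
    (hcut : ∀ S : Finset (Fin n), S.Nonempty → S ≠ univ → 1 ≤ cutSum n a S s₀ T)
    {k : ℕ} (hk : k + 1 < n) {δ : ℝ} (hδ : 0 < δ)
    (hgap : sortedVal hn x σ τ (k + 1) - sortedVal hn x σ τ k = δ)
    (hrise : ∀ t ∈ Set.Icc τ T, ∀ m, m < k + 1 →
      sortedVal hn x σ t m - sortedVal hn x σ τ 0 ≤
        (rbold n a T').toReal⁻¹ ^ (k + 1) * (δ / (8 * n)) +
          m * (rbold n a T').toReal⁻¹ ^ (k + 1 - m) * (δ / (8 * n ^ 2))) : False := by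
  set r := (rbold n a T').toReal with hrdef
  set ρ := r⁻¹ with hρ
  have h0 : 0 < ρ := by positivity
  have h1 : ρ ≤ 1 := inv_le_one_of_one_le₀ hr
  have hn' : (2:ℝ) ≤ n := by exact_mod_cast hn
  set Y := sortedVal hn x σ with hY
  have hYm : ∀ t, Monotone (Y t) := sortedVal_mono hn hσ
  have hτT : τ ≤ T := hτs.trans hsT
  have hwr : ∀ t ∈ Set.Icc τ T,
      ∑ m ∈ range (k + 1), ρ ^ (m + 1) * (Y t m - Y τ m) ≤ ρ ^ (k + 1 + 1) * (δ / 4) :=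
    fun t ht => weighted_rise_le h0 h1 hδ.le hk.le (by omega) (hYm τ) (hrise t ht)
  have hV : ∀ m, m ≤ n → ∀ t, ∑ i : Fin n, truncGeom ρ m i * x t (σ t i) =
      ∑ j ∈ range m, ρ ^ (j + 1) * Y t j := fun m hm t => by
    rw [weighted_eq hn, sum_truncGeom hm]
  -- The weighted sum including rank `k + 1` does not decrease, so that value cannot drop much.
  have hhi : ∀ t ∈ Set.Icc τ T, Y τ (k + 1) - δ / 4 ≤ Y t (k + 1) := by
    intro t ht
    have hg := growth hx hσ (truncGeom ρ (k + 1 + 1)) (truncGeom_antitone h0.le h1 _)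
      (truncGeom_nonneg h0.le _) hτ0 ht.1 (fun _ => 0) (by simp) fun s hs => by
        refine le_trans ?_ (traj_drift hn ha hσ (truncGeom ρ (k + 1 + 1))
          (truncGeom_antitone h0.le h1 _) (truncGeom_nonneg h0.le _) hfin
          ⟨hτ0.trans hs.1, hs.2.trans (ht.2.trans hTT')⟩ (truncGeom_step hr _) 0 (by omega))
        refine mul_nonneg (mul_nonneg (sub_nonneg.mpr (truncGeom_step hr _ _))
          (sub_nonneg.mpr (hYm s (Nat.zero_le _)))) ?_
        exact Finset.sum_nonneg fun i _ => Finset.sum_nonneg fun j _ => (ha i j).1 s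
    rw [hV _ (by omega), hV _ (by omega), intervalIntegral.integral_zero,
      ← Finset.sum_sub_distrib] at hg
    simp only [← mul_sub] at hg
    rw [Finset.sum_range_succ] at hg
    have h2 := hwr t ht
    have h3 : 0 ≤ ρ ^ (k + 1 + 1) * (δ / 4 + (Y t (k + 1) - Y τ (k + 1))) := by
      rw [mul_add]
      linarith
    have := nonneg_of_mul_nonneg_right h3 (by positivity)
    linarith
  have hlo : ∀ t ∈ Set.Icc τ T, Y t k ≤ Y τ k + δ / 8 := by
    intro t ht
    have h2 := hrise t ht k (by omega)
    have h3 : ρ ^ (k + 1) ≤ 1 := pow_le_one₀ h0.le h1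
    have h4 : ρ ^ (k + 1 - k) ≤ 1 := pow_le_one₀ h0.le h1
    have hkn : (k:ℝ) ≤ n := by exact_mod_cast (by omega : k ≤ n)
    have h5 : ρ ^ (k + 1) * (δ / (8 * n)) ≤ 1 * (δ / (8 * n)) := by gcongr
    have h6 : (k:ℝ) * ρ ^ (k + 1 - k) * (δ / (8 * n ^ 2)) ≤ n * 1 * (δ / (8 * n ^ 2)) := by
      gcongr
    have h7 : (n:ℝ) * 1 * (δ / (8 * n ^ 2)) = δ / (8 * n) := by field_simp
    have h8 : δ / (8 * n) ≤ δ / 16 := by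
      apply div_le_div_of_nonneg_left hδ.le (by norm_num)
      linarith
    linarith [hYm τ (Nat.zero_le k)]
  set S := univ.filter (fun i => ¬ k < ((σ τ).symm i : ℕ)) with hS
  have hSt : ∀ t ∈ Set.Icc τ T, (univ.filter fun i => ¬ k < ((σ t).symm i : ℕ)) = S :=
    fun t ht => low_set_const hn hx hσ (c := Y τ k + δ / 2) hτ0
      (fun s hs => by linarith [hlo s hs]) (fun s hs => by linarith [hhi s hs]) ht
  have hSne : S.Nonempty := ⟨σ τ ⟨0, by omega⟩, by simp [hS]⟩
  have hSu : S ≠ univ := by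
    intro h
    have : σ τ ⟨k + 1, hk⟩ ∈ S := by rw [h]; exact mem_univ _
    simp [hS] at this
  have hintg : ∀ i j : Fin n, IntervalIntegrable (a i j) volume τ T :=
    fun i j => weight_integrable ha i j τ T
  have hintg2 : ∀ i : Fin n, IntervalIntegrable (fun t => ∑ j ∈ Sᶜ, a i j t) volume τ T :=
    fun i => by
      have := IntervalIntegrable.sum Sᶜ (fun j _ => hintg i j)
      simpa [Finset.sum_fn] using this
  have hintg3 : IntervalIntegrable (fun t => ∑ i ∈ S, ∑ j ∈ Sᶜ, a i j t) volume τ T := by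
    have := IntervalIntegrable.sum S (fun i _ => hintg2 i)
    simpa [Finset.sum_fn] using this
  have hg := growth hx hσ (truncGeom ρ (k + 1)) (truncGeom_antitone h0.le h1 _)
    (truncGeom_nonneg h0.le _) hτ0 hτT
    (fun t => ρ ^ (k + 1) * (δ / 2) * ∑ i ∈ S, ∑ j ∈ Sᶜ, a i j t)
    (hintg3.const_mul _) fun t ht => by
      have hd := traj_drift hn ha hσ (truncGeom ρ (k + 1))
          (truncGeom_antitone h0.le h1 _) (truncGeom_nonneg h0.le _) hfin
          ⟨hτ0.trans ht.1, ht.2.trans hTT'⟩ (truncGeom_step hr _) k (by omega)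
      rw [hSt t ht] at hd
      refine le_trans ?_ hd
      have e1 : truncGeom ρ (k + 1) k = ρ ^ (k + 1) := by simp [truncGeom]
      have e2 : truncGeom ρ (k + 1) (k + 1) = 0 := by simp [truncGeom]
      rw [e1, e2, mul_zero, sub_zero]
      have hnn : 0 ≤ ∑ i ∈ S, ∑ j ∈ Sᶜ, a i j t :=
        Finset.sum_nonneg fun i _ => Finset.sum_nonneg fun j _ => (ha i j).1 t
      have h9 : δ / 2 ≤ Y t (k + 1) - Y t k := by linarith [hlo t ht, hhi t ht]
      gcongr
  rw [hV _ hk.le, hV _ hk.le, intervalIntegral.integral_const_mul, ← Finset.sum_sub_distrib,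
    intervalIntegral.integral_finsetSum (fun i _ => hintg2 i)] at hg
  simp only [← mul_sub, intervalIntegral.integral_finsetSum (fun j _ => hintg _ j)] at hg
  have hc : 1 ≤ ∑ i ∈ S, ∑ j ∈ Sᶜ, ∫ t in τ..T, a i j t :=
    (hcut S hSne hSu).trans <| Finset.sum_le_sum fun i _ => Finset.sum_le_sum fun j _ =>
      integral_weight_mono ha i j hτs
  have hw := hwr T ⟨hτT, le_rfl⟩
  have hp : ρ ^ (k + 1 + 1) ≤ ρ ^ (k + 1) := pow_le_pow_of_le_one h0.le h1 (by omega)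
  have hp0 : 0 < ρ ^ (k + 1) := by positivity
  have h10 : ρ ^ (k + 1) * (δ / 2) * 1 ≤ ρ ^ (k + 1) * (δ / 2) *
      ∑ i ∈ S, ∑ j ∈ Sᶜ, ∫ t in τ..T, a i j t := by gcongr
  have h11 : ρ ^ (k + 1 + 1) * (δ / 4) ≤ ρ ^ (k + 1) * (δ / 4) := by gcongr
  have h12 : 0 < ρ ^ (k + 1) * δ := by positivity
  linarith

/-- Lemma: gap propagation: under persistent connectivity and finiteness
of 𝐫, a gap between y_l and y_{l+1} at time τ ∈ [t_p, t_p^q] yields some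
τ' ∈ [t_p, t_p^{q+1}] with either a quantified increase of y_1 or a new quantified gap
between y_{l'} and y_{l'+1} for some l' ∈ {1,…,l−1}. -/
theorem stmt16 (n : ℕ) (hn : 2 ≤ n) (a : Fin n → Fin n → ℝ → ℝ) (ha : IsWeight n a)
    (x : ℝ → Fin n → ℝ) (hx : IsTrajectory n a x)
    (σ : ℝ → Equiv.Perm (Fin n)) (hσ : IsSortingPerm n x σ)
    (hconn : PersistentConn n a)
    (hfin : ∀ t : ℝ, 0 ≤ t → rbold n a t ≠ ⊤)
    (p q : ℕ) (hq : q < n / 2)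
    (τ : ℝ) (hτ : τ ∈ Set.Icc (tpSeq n a p) (tpq n a p q))
    (l : ℕ) (hl : 1 ≤ l) (hln : l < n)
    (hgap : x τ (σ τ ⟨l-1, by omega⟩) < x τ (σ τ ⟨l, hln⟩)) :
    ∃ τ' ∈ Set.Icc (tpSeq n a p) (tpq n a p (q+1)),
      ((rbold n a (tpSeq n a (p+1))).toReal ^ (-(l:ℤ)) / (8*(n:ℝ))) *
          (x τ (σ τ ⟨l, hln⟩) - x τ (σ τ ⟨l-1, by omega⟩)) ≤
        x τ' (σ τ' ⟨0, by omega⟩) - x τ (σ τ ⟨0, by omega⟩) ∨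
      ∃ (l' : ℕ) (hl' : 1 ≤ l' ∧ l' ≤ l - 1),
        ((rbold n a (tpSeq n a (p+1))).toReal ^ ((l':ℤ) - (l:ℤ)) / (8*(n:ℝ)^2)) *
            (x τ (σ τ ⟨l, hln⟩) - x τ (σ τ ⟨l-1, by omega⟩)) ≤
          x τ' (σ τ' ⟨l', by omega⟩) - x τ' (σ τ' ⟨l'-1, by omega⟩) := by
  have hT'0 : 0 ≤ tpSeq n a (p + 1) := tpSeq_nonneg hn ha hconn _
  have hp0 : 0 ≤ tpSeq n a p := tpSeq_nonneg hn ha hconn _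
  have hr := one_le_rbold hn ha hT'0 (hfin _ hT'0)
  have hTT' : tpq n a p (q + 1) ≤ tpSeq n a (p + 1) := by
    rw [tpSeq_succ]
    exact tpq_mono hn ha hconn p hq
  have hsT : tpq n a p q ≤ tpq n a p (q + 1) := tpq_mono hn ha hconn p q.le_succ
  obtain ⟨k, rfl⟩ : ∃ k, l = k + 1 := ⟨l - 1, by omega⟩
  simp only [sortedVal_eq hn x σ, Nat.add_sub_cancel] at hgap ⊢
  by_contra! hno
  refine no_small_rise hn ha hx hσ (hfin _ hT'0) hr (hp0.trans hτ.1) hτ.2 hsT hTT' ?_ hln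
    (sub_pos.mpr hgap) rfl ?_
  · intro S hS hS'
    rw [tpq, tpq, Function.iterate_succ_apply']
    exact one_le_cutSum_nextTime hn ha hconn _ hS hS'
  · intro t ht
    set r := (rbold n a (tpSeq n a (p + 1))).toReal with hrdef
    have hr0 : 0 < r := by positivity
    obtain ⟨hA, hB⟩ := hno t ⟨hτ.1.trans ht.1, ht.2⟩
    refine sorted_rise_le (inv_pos.mpr hr0) (inv_le_one_of_one_le₀ hr) ?_ ?_ ?_
    · have := sub_pos.mpr hgap
      positivity
    · refine hA.le.trans (le_of_eq ?_)
      rw [zpow_neg, zpow_natCast, inv_pow]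
      ring
    · intro m hm
      refine (hB (m + 1) ⟨by omega, by omega⟩).le.trans (le_of_eq ?_)
      have : ((m + 1 : ℕ) : ℤ) - ((k + 1 : ℕ) : ℤ) = -((k + 1 - (m + 1) : ℕ) : ℤ) := by omega
      rw [this, zpow_neg, zpow_natCast, inv_pow]
      ring
end

section
/- Consider the two-agent system with symmetric weights a_{12}(t) = a_{21}(t) equal to 1 if t ∈ [k, k + 2^{−(k+1)}] for some k ∈ ℕ and 0 otherwise, with initial positions x_1(0) < x_2(0). Then for all k ∈ ℕ, x_2(k) − x_1(k) = e^{−2(1 − 2^{−k})} (x_2(0) − x_1(0)); in particular x_2(k) − x_1(k) ≥ e^{−2}(x_2(0) − x_1(0)) > 0 for all k, so the trajectory does not reach a consensus (the diameter does not tend to 0). -/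
/-!
The difference `d t = x t 1 - x t 0` satisfies `d t = d s - 2 ∫ₛᵗ w17 * d` for `0 ≤ s ≤ t`
(`diff_integral_eq`). On `[k, k + 2^{-(k+1)}]` the weight is `1`, so `d` solves `d' = -2 d` there
and is multiplied by `exp (-2 * 2^{-(k+1)})` (`exp_decay_of_integral_eq`); on the rest of
`[k, k+1)` the weight vanishes and `d` is constant. Multiplying these factors and summing the
geometric series gives the formula at the integers. Since `d k ≥ exp (-2) * d 0 > 0` for all `k`,
the two coordinates cannot have the same limit.
-/

open MeasureTheory Filter Finset

open Classical in
/-- Symmetric interaction weight of the two-agent counterexample: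
equal to 1 on the intervals [k, k + 2^{-(k+1)}], k ∈ ℕ, and 0 elsewhere. -/
noncomputable def w17 : ℝ → ℝ := fun t =>
  if ∃ k : ℕ, (k:ℝ) ≤ t ∧ t ≤ (k:ℝ) + (1/2:ℝ)^(k+1) then 1 else 0

/-- The corresponding weight matrix a_{12} = a_{21} = w17 (zero diagonal). -/
noncomputable def a17 : Fin 2 → Fin 2 → ℝ → ℝ := fun i j t => if i = j then 0 else w17 t

/-- A trajectory of the two-agent system (Carathéodory integral equation). -/
def IsTrajectory17 (x : ℝ → Fin 2 → ℝ) : Prop :=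
  (∀ i : Fin 2, ContinuousOn (fun t => x t i) (Set.Ici (0:ℝ))) ∧
  (∀ i : Fin 2, ∀ t : ℝ, 0 ≤ t →
    IntervalIntegrable (fun s => ∑ j : Fin 2, a17 i j s * (x s j - x s i))
      MeasureTheory.volume 0 t ∧
    x t i = x 0 i + ∫ s in (0:ℝ)..t, ∑ j : Fin 2, a17 i j s * (x s j - x s i))

/-- The integral form of `f' = -2 f` on `[a, b]` forces exponential decay. -/
lemma exp_decay_of_integral_eq {f : ℝ → ℝ} {a b : ℝ} (hab : a ≤ b)
    (hf : ContinuousOn f (Set.Icc a b))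
    (h : ∀ t ∈ Set.Icc a b, f t = f a - 2 * ∫ s in a..t, f s) :
    f b = Real.exp (-2 * (b - a)) * f a := by
  -- A globally continuous extension `g` of `f` makes the integral differentiable everywhere.
  set g : ℝ → ℝ := Set.IccExtend hab ((Set.Icc a b).domRestrict f) with hg
  have hgc : Continuous g := hf.domRestrict.Icc_extend'
  have hgf : ∀ t ∈ Set.Icc a b, g t = f t := fun t ht => by
    rw [hg, Set.IccExtend_of_mem hab _ ht]; rfl
  have hE : ∀ t ∈ Set.Icc a b, f t = f a - 2 * ∫ s in a..t, g s := fun t ht => by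
    rw [h t ht]
    congr 2
    refine intervalIntegral.integral_congr fun s hs => (hgf s ?_).symm
    rw [Set.uIcc_of_le ht.1] at hs
    exact ⟨hs.1, hs.2.trans ht.2⟩
  have hD : ∀ t ∈ Set.Icc a b, HasDerivAt
      (fun t => Real.exp (2 * t) * (f a - 2 * ∫ s in a..t, g s)) 0 t := fun t ht => by
    have h1 : HasDerivAt (fun t => ∫ s in a..t, g s) (g t) t :=
      hgc.integral_hasStrictDerivAt a t |>.hasDerivAt
    have h2 : HasDerivAt (fun t : ℝ => Real.exp (2 * t)) (Real.exp (2 * t) * (2 * 1)) t :=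
      ((hasDerivAt_id t).const_mul 2).exp
    refine (h2.mul ((h1.const_mul 2).const_sub (f a))).congr_deriv ?_
    rw [← hE t ht, hgf t ht]; ring
  have hconst := constant_of_has_deriv_right_zero
    (fun t ht => (hD t ht).continuousAt.continuousWithinAt)
    (fun t ht => (hD t ⟨ht.1, ht.2.le⟩).hasDerivWithinAt) b ⟨hab, le_rfl⟩
  simp only [← hE b ⟨hab, le_rfl⟩, intervalIntegral.integral_same, mul_zero, sub_zero] at hconst
  have : Real.exp (-2 * (b - a)) = Real.exp (2 * a) * Real.exp (-(2 * b)) := by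
    rw [← Real.exp_add]; ring_nf
  rw [this, mul_right_comm, ← hconst, mul_right_comm, ← Real.exp_add]
  simp

lemma w17_eq_one {k : ℕ} {t : ℝ} (h1 : (k:ℝ) ≤ t) (h2 : t ≤ (k:ℝ) + (1/2:ℝ)^(k+1)) :
    w17 t = 1 := if_pos ⟨k, h1, h2⟩

lemma w17_eq_zero {k : ℕ} {t : ℝ} (h1 : (k:ℝ) + (1/2:ℝ)^(k+1) < t) (h2 : t < (k:ℝ) + 1) :
    w17 t = 0 := by
  refine if_neg ?_
  rintro ⟨m, hm1, hm2⟩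
  have hp : (0:ℝ) < (1/2:ℝ)^(k+1) := by positivity
  have hmk : m ≤ k := by
    have : (m:ℝ) < ((k + 1 : ℕ) : ℝ) := by push_cast; linarith
    exact Nat.lt_succ_iff.mp (by exact_mod_cast this)
  rcases hmk.eq_or_lt with rfl | hlt
  · linarith
  · have h3 : (m:ℝ) + 1 ≤ k := by exact_mod_cast hlt
    have h4 : (1/2:ℝ)^(m+1) ≤ 1 := pow_le_one₀ (by norm_num) (by norm_num)
    linarith

lemma diff_integral_eq {x : ℝ → Fin 2 → ℝ} (hx : IsTrajectory17 x) {s t : ℝ} (hs : 0 ≤ s)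
    (hst : s ≤ t) :
    x t 1 - x t 0 = (x s 1 - x s 0) - 2 * ∫ u in s..t, w17 u * (x u 1 - x u 0) := by
  have key : ∀ i : Fin 2, x t i = x s i
      + ∫ u in s..t, ∑ j : Fin 2, a17 i j u * (x u j - x u i) := fun i => by
    obtain ⟨i1, e1⟩ := hx.2 i s hs
    obtain ⟨i2, e2⟩ := hx.2 i t (hs.trans hst)
    rw [e2, e1, add_assoc, intervalIntegral.integral_add_adjacent_intervals i1 (i1.symm.trans i2)]
  have k0 := key 0
  have k1 := key 1
  have e0 : ∀ u, ∑ j : Fin 2, a17 0 j u * (x u j - x u 0) = w17 u * (x u 1 - x u 0) := fun u => by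
    simp [a17]
  have e1 : ∀ u, ∑ j : Fin 2, a17 1 j u * (x u j - x u 1) = -(w17 u * (x u 1 - x u 0)) :=
    fun u => by simp [a17]; ring
  simp only [e0] at k0
  simp only [e1, intervalIntegral.integral_neg] at k1
  rw [k0, k1]; ring

lemma diff_step {x : ℝ → Fin 2 → ℝ} (hx : IsTrajectory17 x) (k : ℕ) :
    x ((k:ℝ) + 1) 1 - x ((k:ℝ) + 1) 0
      = Real.exp (-2 * (1/2:ℝ)^(k+1)) * (x (k:ℝ) 1 - x (k:ℝ) 0) := by
  have hk : (0:ℝ) ≤ k := k.cast_nonneg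
  have hp : (0:ℝ) < (1/2:ℝ)^(k+1) := by positivity
  have hp1 : (1/2:ℝ)^(k+1) ≤ 1 := pow_le_one₀ (by norm_num) (by norm_num)
  have hdecay := exp_decay_of_integral_eq (f := fun t => x t 1 - x t 0) (a := k)
    (b := (k:ℝ) + (1/2:ℝ)^(k+1)) (by linarith)
    (((hx.1 1).sub (hx.1 0)).mono fun t ht => hk.trans ht.1)
    (fun t ht => by
      rw [diff_integral_eq hx hk ht.1]
      congr 2
      refine intervalIntegral.integral_congr fun u hu => ?_
      rw [Set.uIcc_of_le ht.1] at hu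
      simp only [w17_eq_one hu.1 (hu.2.trans ht.2), one_mul])
  have hconst := diff_integral_eq hx (s := (k:ℝ) + (1/2:ℝ)^(k+1)) (t := (k:ℝ) + 1)
    (by linarith) (by linarith)
  have hzero : ∫ u in ((k:ℝ) + (1/2:ℝ)^(k+1))..((k:ℝ) + 1), w17 u * (x u 1 - x u 0) = 0 := by
    rw [intervalIntegral.integral_of_le (by linarith), integral_Ioc_eq_integral_Ioo]
    refine setIntegral_eq_zero_of_forall_eq_zero fun u hu => ?_
    rw [w17_eq_zero hu.1 hu.2, zero_mul]
  rw [hconst, hzero, mul_zero, sub_zero]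
  simpa using hdecay

/-- for the two-agent system with the above bounded symmetric weights
(an example satisfying ultimate connectivity), for every k ∈ ℕ,
x₂(k) − x₁(k) = e^{−2(1−2^{−k})}(x₂(0) − x₁(0)) ≥ e^{−2}(x₂(0) − x₁(0)) > 0,
and the trajectory does not reach a consensus. -/
theorem stmt17 (x : ℝ → Fin 2 → ℝ) (hx : IsTrajectory17 x) (h0 : x 0 0 < x 0 1) :
    (∀ k : ℕ, x (k:ℝ) 1 - x (k:ℝ) 0 =
      Real.exp (-2 * (1 - (1/2:ℝ)^k)) * (x 0 1 - x 0 0)) ∧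
    (∀ k : ℕ, Real.exp (-2) * (x 0 1 - x 0 0) ≤ x (k:ℝ) 1 - x (k:ℝ) 0) ∧
    (∀ k : ℕ, 0 < x (k:ℝ) 1 - x (k:ℝ) 0) ∧
    ¬ ∃ c : ℝ, ∀ i : Fin 2, Tendsto (fun t => x t i) atTop (nhds c) := by
  have hd : 0 < x 0 1 - x 0 0 := sub_pos.mpr h0
  have h1 : ∀ k : ℕ, x (k:ℝ) 1 - x (k:ℝ) 0 =
      Real.exp (-2 * (1 - (1/2:ℝ)^k)) * (x 0 1 - x 0 0) := by
    intro k
    induction k with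
    | zero => simp
    | succ k ih =>
      rw [Nat.cast_succ, diff_step hx, ih, ← mul_assoc, ← Real.exp_add]
      congr 2
      ring
  have h2 : ∀ k : ℕ, Real.exp (-2) * (x 0 1 - x 0 0) ≤ x (k:ℝ) 1 - x (k:ℝ) 0 := by
    intro k
    rw [h1 k]
    refine mul_le_mul_of_nonneg_right (Real.exp_le_exp.mpr ?_) hd.le
    have : (0:ℝ) < (1/2:ℝ)^k := by positivity
    linarith
  have hpos : 0 < Real.exp (-2) * (x 0 1 - x 0 0) := mul_pos (Real.exp_pos _) hd
  refine ⟨h1, h2, fun k => hpos.trans_le (h2 k), ?_⟩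
  rintro ⟨c, hc⟩
  have hlim := ((hc 1).sub (hc 0)).comp tendsto_natCast_atTop_atTop
  have := ge_of_tendsto' hlim h2
  linarith
end

section
/- Consider the three-agent system with x_1(0) < x_2(0) < x_3(0), where for t ∈ [2p, 2p+1): ẋ_1 = x_2 − x_1, ẋ_2 = ρ_p(x_1 − x_2), ẋ_3 = 0, and for t ∈ [2p+1, 2p+2): ẋ_1 = 0, ẋ_2 = ρ_p(x_3 − x_2), ẋ_3 = x_2 − x_3. Set λ_p = (1 − e^{−(ρ_p+1)})/(1 + ρ_p). Then for all p ∈ ℕ: x_3(2p+2) − x_1(2p+2) ≥ (1 − 2λ_p)(x_3(2p) − x_1(2p)), and hence for all P ∈ ℕ, x_3(2P) − x_1(2P) ≥ ∏_{p=0}^{P−1}(1 − 2λ_p) · (x_3(0) − x_1(0)). -/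
/-!
On each unit interval one extreme agent `f` and the middle agent `g` interact by
`f' = g - f`, `g' = r (f - g)` while the other extreme agent rests. The gap `g - f` satisfies a
scalar linear equation and is multiplied by `exp (-(r + 1))` (`decay_of_integral_eq`), while
`r f + g` is conserved; hence `f` moves by exactly `λ (g - f)` with
`λ = (1 - exp (-(r + 1))) / (1 + r)` (`pair_step`).

Over one period the diameter `D = x₃ - x₁` thus loses `λ` times the initial gap `x₂ - x₁` and
`λ` times the gap `x₃ - x₂` at half period. The order `x₁ ≤ x₂ ≤ x₃` is preserved by both phases
(`ordered_at_even`), so both gaps are at most `D`, which gives the factor `1 - 2 λ`. As `r ≥ 1`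
forces `λ ≤ 1 / 2`, these factors are nonnegative and the bounds multiply.
-/

open MeasureTheory Filter Finset

/-- Weight matrix of the three-agent example: on [2p, 2p+1) agent 1 is attracted to
agent 2 with weight 1 and agent 2 to agent 1 with weight ρ_p; on [2p+1, 2p+2) agent 2
is attracted to agent 3 with weight ρ_p and agent 3 to agent 2 with weight 1.
(Agents 1,2,3 are indexed 0,1,2.) -/
noncomputable def a18 (ρ : ℕ → ℝ) : Fin 3 → Fin 3 → ℝ → ℝ := fun i j t =>
  if ⌊t⌋₊ % 2 = 0 then
    if i = 0 ∧ j = 1 then 1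
    else if i = 1 ∧ j = 0 then ρ (⌊t⌋₊ / 2)
    else 0
  else
    if i = 1 ∧ j = 2 then ρ (⌊t⌋₊ / 2)
    else if i = 2 ∧ j = 1 then 1
    else 0

/-- A trajectory of the three-agent system (Carathéodory integral equation). -/
def IsTrajectory18 (ρ : ℕ → ℝ) (x : ℝ → Fin 3 → ℝ) : Prop :=
  (∀ i : Fin 3, ContinuousOn (fun t => x t i) (Set.Ici (0:ℝ))) ∧
  (∀ i : Fin 3, ∀ t : ℝ, 0 ≤ t →
    IntervalIntegrable (fun s => ∑ j : Fin 3, a18 ρ i j s * (x s j - x s i))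
      MeasureTheory.volume 0 t ∧
    x t i = x 0 i + ∫ s in (0:ℝ)..t, ∑ j : Fin 3, a18 ρ i j s * (x s j - x s i))

/-- λ_p = (1 − e^{−(ρ_p+1)})/(1 + ρ_p). -/
noncomputable def lam18 (ρ : ℕ → ℝ) (p : ℕ) : ℝ :=
  (1 - Real.exp (-(ρ p + 1))) / (1 + ρ p)

/-- A continuous solution of the integral form of `u' = -c u` is multiplied by `exp (-c)` over a
unit of time. -/
theorem decay_of_integral_eq (a c : ℝ) (u : ℝ → ℝ) (hc : ContinuousOn u (Set.Icc a (a + 1)))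
    (hu : ∀ t ∈ Set.Icc a (a + 1), u t = u a - c * ∫ s in a..t, u s) :
    u (a + 1) = Real.exp (-c) * u a := by
  -- `v` extends `u` continuously to the line, so that its primitive is differentiable everywhere.
  set v : ℝ → ℝ := fun t => u (max a (min t (a + 1))) with hv
  have hvc : Continuous v :=
    hc.comp_continuous (by fun_prop)
      (fun t => ⟨le_max_left _ _, max_le (by linarith) (min_le_right _ _)⟩)
  have hveq : ∀ t ∈ Set.Icc a (a + 1), v t = u t := by
    intro t ht
    simp only [hv, min_eq_left ht.2, max_eq_right ht.1]
  have hint : ∀ t ∈ Set.Icc a (a + 1), u t = u a - c * ∫ s in a..t, v s := by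
    intro t ht
    rw [hu t ht]
    congr 2
    apply intervalIntegral.integral_congr_Ioo_of_le ht.1
    intro s hs
    exact (hveq s ⟨hs.1.le, hs.2.le.trans ht.2⟩).symm
  have hder : ∀ t, HasDerivAt
      (fun t => Real.exp (c * (t - a)) * (u a - c * ∫ s in a..t, v s))
      (Real.exp (c * (t - a)) * (c * 1) * (u a - c * ∫ s in a..t, v s)
        + Real.exp (c * (t - a)) * (-(c * v t))) t := by
    intro t
    have h1 : HasDerivAt (fun t => Real.exp (c * (t - a))) (Real.exp (c * (t - a)) * (c * 1)) t :=
      (((hasDerivAt_id t).sub_const a).const_mul c).exp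
    have h2 : HasDerivAt (fun t => u a - c * ∫ s in a..t, v s) (-(c * v t)) t :=
      ((hvc.integral_hasStrictDerivAt a t).hasDerivAt.const_mul c).const_sub (u a)
    exact h1.mul h2
  have hconst := constant_of_has_deriv_right_zero
    (f := fun t => Real.exp (c * (t - a)) * (u a - c * ∫ s in a..t, v s)) (a := a) (b := a + 1)
    (fun t _ => (hder t).continuousAt.continuousWithinAt)
    (fun t ht => by
      have h := (hder t).hasDerivWithinAt (s := Set.Ici t)
      have ht' : t ∈ Set.Icc a (a + 1) := ⟨ht.1, ht.2.le⟩
      rw [← hint t ht', hveq t ht'] at h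
      convert h using 1
      ring)
    (a + 1) ⟨by linarith, le_rfl⟩
  simp only [← hint (a + 1) ⟨by linarith, le_rfl⟩] at hconst
  simp only [add_sub_cancel_left, mul_one, sub_self, mul_zero, Real.exp_zero,
    intervalIntegral.integral_same, sub_zero, one_mul] at hconst
  rw [← hconst, ← mul_assoc, ← Real.exp_add]
  simp

/-- Exact solution over a unit of time of `f' = g - f`, `g' = r (f - g)` in integral form. -/
theorem pair_step (a r : ℝ) (hr : 1 ≤ r) (f g : ℝ → ℝ)
    (hfc : ContinuousOn f (Set.Icc a (a + 1))) (hgc : ContinuousOn g (Set.Icc a (a + 1)))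
    (hf : ∀ t ∈ Set.Icc a (a + 1), f t = f a + ∫ s in a..t, (g s - f s))
    (hg : ∀ t ∈ Set.Icc a (a + 1), g t = g a + ∫ s in a..t, r * (f s - g s)) :
    f (a + 1) = f a + (1 - Real.exp (-(r + 1))) / (1 + r) * (g a - f a) ∧
    g (a + 1) - f (a + 1) = Real.exp (-(r + 1)) * (g a - f a) := by
  have hg' : ∀ t ∈ Set.Icc a (a + 1), g t = g a - r * ∫ s in a..t, (g s - f s) := by
    intro t ht
    rw [hg t ht, ← intervalIntegral.integral_const_mul, sub_eq_add_neg,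
      ← intervalIntegral.integral_neg]
    congr 2
    funext s
    ring
  have hd := decay_of_integral_eq a (r + 1) (fun t => g t - f t) (hgc.sub hfc) (by
    intro t ht
    rw [hg' t ht, hf t ht]
    ring)
  have hmem : a + 1 ∈ Set.Icc a (a + 1) := ⟨by linarith, le_rfl⟩
  have h1 := hf _ hmem
  have h2 := hg' _ hmem
  refine ⟨?_, hd⟩
  have hne : (1 + r) ≠ 0 := by linarith
  field_simp
  -- `r f + g` is conserved.
  linear_combination hd * (-1) + r * h1 + h2

theorem trajectory_restart {ρ : ℕ → ℝ} {x : ℝ → Fin 3 → ℝ} (hx : IsTrajectory18 ρ x) (n : ℕ)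
    (i : Fin 3) (G : ℝ → ℝ)
    (hG : ∀ s ∈ Set.Ioo (n : ℝ) (n + 1), ∑ j : Fin 3, a18 ρ i j s * (x s j - x s i) = G s) :
    ∀ t ∈ Set.Icc (n : ℝ) (n + 1), x t i = x n i + ∫ s in (n : ℝ)..t, G s := by
  intro t ht
  have hn : (0 : ℝ) ≤ n := n.cast_nonneg
  obtain ⟨hi1, he1⟩ := hx.2 i n hn
  obtain ⟨hi2, he2⟩ := hx.2 i t (hn.trans ht.1)
  have h := intervalIntegral.integral_interval_sub_left hi2 hi1
  have h' := intervalIntegral.integral_congr_Ioo_of_le (μ := volume) ht.1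
    (fun s hs => hG s ⟨hs.1, hs.2.trans_le ht.2⟩)
  rw [← h', ← h, he1, he2]
  ring

theorem floor_of_mem {n : ℕ} {s : ℝ} (hs : s ∈ Set.Ioo (n : ℝ) (n + 1)) : ⌊s⌋₊ = n :=
  (Nat.floor_eq_iff (n.cast_nonneg.trans hs.1.le)).2 ⟨hs.1.le, hs.2⟩

/-- The first half of period `p`, where agents 1 and 2 interact. -/
theorem phase_even {ρ : ℕ → ℝ} (hρ : ∀ p, 1 ≤ ρ p) {x : ℝ → Fin 3 → ℝ}
    (hx : IsTrajectory18 ρ x) (p : ℕ) :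
    x (2 * (p : ℝ) + 1) 0 = x (2 * (p : ℝ)) 0
      + lam18 ρ p * (x (2 * (p : ℝ)) 1 - x (2 * (p : ℝ)) 0) ∧
    x (2 * (p : ℝ) + 1) 1 - x (2 * (p : ℝ) + 1) 0
      = Real.exp (-(ρ p + 1)) * (x (2 * (p : ℝ)) 1 - x (2 * (p : ℝ)) 0) ∧
    x (2 * (p : ℝ) + 1) 2 = x (2 * (p : ℝ)) 2 := by
  have hcast : (2 * (p : ℝ)) = ((2 * p : ℕ) : ℝ) := by push_cast; ring
  rw [hcast]
  have hsub : Set.Icc ((2 * p : ℕ) : ℝ) ((2 * p : ℕ) + 1) ⊆ Set.Ici 0 :=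
    fun t ht => (Nat.cast_nonneg _).trans ht.1
  have h0 := trajectory_restart hx (2 * p) 0 (fun s => x s 1 - x s 0) (by
    intro s hs
    simp [a18, floor_of_mem hs])
  have h1 := trajectory_restart hx (2 * p) 1 (fun s => ρ p * (x s 0 - x s 1)) (by
    intro s hs
    simp [a18, floor_of_mem hs])
  have h2 := trajectory_restart hx (2 * p) 2 (fun _ => 0) (by
    intro s hs
    simp [a18, floor_of_mem hs])
  obtain ⟨ha, hb⟩ := pair_step _ (ρ p) (hρ p) (fun t => x t 0) (fun t => x t 1)
    ((hx.1 0).mono hsub) ((hx.1 1).mono hsub) h0 h1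
  refine ⟨ha, hb, ?_⟩
  simpa using h2 _ ⟨by linarith, le_rfl⟩

/-- The second half of period `p`, where agents 2 and 3 interact. -/
theorem phase_odd {ρ : ℕ → ℝ} (hρ : ∀ p, 1 ≤ ρ p) {x : ℝ → Fin 3 → ℝ}
    (hx : IsTrajectory18 ρ x) (p : ℕ) :
    x (2 * (p : ℝ) + 2) 2 = x (2 * (p : ℝ) + 1) 2
      + lam18 ρ p * (x (2 * (p : ℝ) + 1) 1 - x (2 * (p : ℝ) + 1) 2) ∧
    x (2 * (p : ℝ) + 2) 1 - x (2 * (p : ℝ) + 2) 2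
      = Real.exp (-(ρ p + 1)) * (x (2 * (p : ℝ) + 1) 1 - x (2 * (p : ℝ) + 1) 2) ∧
    x (2 * (p : ℝ) + 2) 0 = x (2 * (p : ℝ) + 1) 0 := by
  have hcast : (2 * (p : ℝ) + 1) = ((2 * p + 1 : ℕ) : ℝ) := by push_cast; ring
  have hcast' : (2 * (p : ℝ) + 2) = ((2 * p + 1 : ℕ) : ℝ) + 1 := by push_cast; ring
  rw [hcast, hcast']
  have hsub : Set.Icc ((2 * p + 1 : ℕ) : ℝ) ((2 * p + 1 : ℕ) + 1) ⊆ Set.Ici 0 :=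
    fun t ht => (Nat.cast_nonneg _).trans ht.1
  have hmod : (2 * p + 1) % 2 = 1 := by omega
  have hdiv : (2 * p + 1) / 2 = p := by omega
  have h2 := trajectory_restart hx (2 * p + 1) 2 (fun s => x s 1 - x s 2) (by
    intro s hs
    simp [a18, floor_of_mem hs, hmod])
  have h1 := trajectory_restart hx (2 * p + 1) 1 (fun s => ρ p * (x s 2 - x s 1)) (by
    intro s hs
    simp [a18, floor_of_mem hs, hmod, hdiv])
  have h0 := trajectory_restart hx (2 * p + 1) 0 (fun _ => 0) (by
    intro s hs
    simp [a18, floor_of_mem hs, hmod])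
  obtain ⟨ha, hb⟩ := pair_step _ (ρ p) (hρ p) (fun t => x t 2) (fun t => x t 1)
    ((hx.1 2).mono hsub) ((hx.1 1).mono hsub) h2 h1
  refine ⟨ha, hb, ?_⟩
  simpa using h0 _ ⟨by linarith, le_rfl⟩

theorem lam18_nonneg {ρ : ℕ → ℝ} (hρ : ∀ p, 1 ≤ ρ p) (p : ℕ) : 0 ≤ lam18 ρ p := by
  have h := hρ p
  have he : Real.exp (-(ρ p + 1)) ≤ 1 := Real.exp_le_one_iff.2 (by linarith)
  exact div_nonneg (by linarith) (by linarith)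

theorem lam18_le_half {ρ : ℕ → ℝ} (hρ : ∀ p, 1 ≤ ρ p) (p : ℕ) : lam18 ρ p ≤ 1 / 2 := by
  have h := hρ p
  have he := Real.exp_pos (-(ρ p + 1))
  unfold lam18
  rw [div_le_iff₀ (by linarith)]
  linarith

/-- If `x₁ ≤ x₂ ≤ x₃` at time `2p`, then at time `2p + 1` agent 2 still lies between agent 3 and
the position of agent 1 at time `2p`, and the order holds again at time `2p + 2`. -/
theorem period_order {ρ : ℕ → ℝ} (hρ : ∀ p, 1 ≤ ρ p) {x : ℝ → Fin 3 → ℝ}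
    (hx : IsTrajectory18 ρ x) (p : ℕ)
    (h01 : x (2 * (p : ℝ)) 0 ≤ x (2 * (p : ℝ)) 1) (h12 : x (2 * (p : ℝ)) 1 ≤ x (2 * (p : ℝ)) 2) :
    x (2 * (p : ℝ)) 0 ≤ x (2 * (p : ℝ) + 1) 1 ∧
    x (2 * (p : ℝ) + 2) 0 ≤ x (2 * (p : ℝ) + 2) 1 ∧
    x (2 * (p : ℝ) + 2) 1 ≤ x (2 * (p : ℝ) + 2) 2 := by
  obtain ⟨a1, a2, a3⟩ := phase_even hρ hx p
  obtain ⟨b1, b2, b3⟩ := phase_odd hρ hx p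
  have hl := lam18_nonneg hρ p
  have he := Real.exp_pos (-(ρ p + 1))
  have hr : 0 < 1 + ρ p := by linarith [hρ p]
  have hr1 : 0 ≤ ρ p := by linarith [hρ p]
  have hlam : lam18 ρ p * (1 + ρ p) = 1 - Real.exp (-(ρ p + 1)) := by
    unfold lam18
    field_simp
  -- `λ + e ≤ 1`: agent 2 moves towards its partner in each phase.
  have hsum : lam18 ρ p + Real.exp (-(ρ p + 1)) ≤ 1 := by
    nlinarith [mul_nonneg hl hr1]
  set e := Real.exp (-(ρ p + 1))
  set l := lam18 ρ p
  have k1 : 0 ≤ l * (x (2 * (p : ℝ)) 1 - x (2 * (p : ℝ)) 0) := mul_nonneg hl (by linarith)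
  have k2 : 0 ≤ e * (x (2 * (p : ℝ)) 1 - x (2 * (p : ℝ)) 0) := mul_nonneg he.le (by linarith)
  have k3 : 0 ≤ (1 - (l + e)) * (x (2 * (p : ℝ)) 1 - x (2 * (p : ℝ)) 0) :=
    mul_nonneg (by linarith) (by linarith)
  have m0 : x (2 * (p : ℝ) + 1) 1 ≤ x (2 * (p : ℝ) + 1) 2 := by linarith
  have m2 : 0 ≤ e * (x (2 * (p : ℝ) + 1) 2 - x (2 * (p : ℝ) + 1) 1) :=
    mul_nonneg he.le (by linarith)
  have m3 : 0 ≤ (1 - (l + e)) * (x (2 * (p : ℝ) + 1) 2 - x (2 * (p : ℝ) + 1) 1) :=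
    mul_nonneg (by linarith) (by linarith)
  exact ⟨by linarith, by linarith, by linarith⟩

theorem ordered_at_even {ρ : ℕ → ℝ} (hρ : ∀ p, 1 ≤ ρ p) {x : ℝ → Fin 3 → ℝ}
    (hx : IsTrajectory18 ρ x) (h01 : x 0 0 < x 0 1) (h12 : x 0 1 < x 0 2) (p : ℕ) :
    x (2 * (p : ℝ)) 0 ≤ x (2 * (p : ℝ)) 1 ∧ x (2 * (p : ℝ)) 1 ≤ x (2 * (p : ℝ)) 2 := by
  induction p with
  | zero => simpa using ⟨h01.le, h12.le⟩
  | succ p ih =>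
    have hcast : 2 * ((p + 1 : ℕ) : ℝ) = 2 * (p : ℝ) + 2 := by push_cast; ring
    rw [hcast]
    exact (period_order hρ hx p ih.1 ih.2).2

/-- for the three-agent example, for all p,
x₃(2p+2) − x₁(2p+2) ≥ (1 − 2λ_p)(x₃(2p) − x₁(2p)), and hence for all P,
x₃(2P) − x₁(2P) ≥ ∏_{p=0}^{P−1}(1 − 2λ_p) (x₃(0) − x₁(0)). -/
theorem stmt18 (ρ : ℕ → ℝ) (hmono : Monotone ρ) (hρ : ∀ p, 1 ≤ ρ p)
    (x : ℝ → Fin 3 → ℝ) (hx : IsTrajectory18 ρ x)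
    (h01 : x 0 0 < x 0 1) (h12 : x 0 1 < x 0 2) :
    (∀ p : ℕ, (1 - 2 * lam18 ρ p) * (x (2*(p:ℝ)) 2 - x (2*(p:ℝ)) 0) ≤
      x (2*(p:ℝ)+2) 2 - x (2*(p:ℝ)+2) 0) ∧
    (∀ P : ℕ, (∏ p ∈ Finset.range P, (1 - 2 * lam18 ρ p)) * (x 0 2 - x 0 0) ≤
      x (2*(P:ℝ)) 2 - x (2*(P:ℝ)) 0) := by
  have hstep : ∀ p : ℕ, (1 - 2 * lam18 ρ p) * (x (2*(p:ℝ)) 2 - x (2*(p:ℝ)) 0) ≤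
      x (2*(p:ℝ)+2) 2 - x (2*(p:ℝ)+2) 0 := by
    intro p
    obtain ⟨o1, o2⟩ := ordered_at_even hρ hx h01 h12 p
    obtain ⟨o3, -, -⟩ := period_order hρ hx p o1 o2
    obtain ⟨a1, -, a3⟩ := phase_even hρ hx p
    obtain ⟨b1, -, b3⟩ := phase_odd hρ hx p
    have hl := lam18_nonneg hρ p
    rw [b1, b3, a1, a3]
    have k1 := mul_nonneg hl (sub_nonneg.2 o2)
    have k2 := mul_nonneg hl (sub_nonneg.2 o3)
    linarith
  refine ⟨hstep, fun P => ?_⟩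
  induction P with
  | zero => simp
  | succ P ih =>
    have hcast : 2 * ((P + 1 : ℕ) : ℝ) = 2 * (P : ℝ) + 2 := by push_cast; ring
    rw [hcast, Finset.prod_range_succ]
    have hnn : 0 ≤ 1 - 2 * lam18 ρ P := by linarith [lam18_le_half hρ P]
    have hmul := mul_le_mul_of_nonneg_left ih hnn
    linarith [hstep P]
end
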